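/- arXiv:2407.11031 — 2 statements merged into one kernel-verified Lean document; each statement's English description precedes it below -/
import Mathlib

section
/- Fix δ ∈ (0,1) and ε ∈ [0,1). There exists a constant c(δ) > 0 depending only on δ such that: if √(mn/k)·log(ek/(mn)) / (1−ε) ≤ c(δ), then with probability at least 1 − δ (over the data and the noise), every minimizer ũ of u ↦ ‖Θ − A_W u‖₁ over ℝ^{mn} satisfies A_W ũ = W*. -/
open MeasureTheory ProbabilityTheory Real

noncomputable section

def dot {k : ℕ} (x y : Fin k → ℝ) : ℝ := ∑ i, x i * y i

/-- `a`-th non-overlapping patch (block of `k` consecutive coordinates). -/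
def patch (m k : ℕ) (a : Fin m) (v : Fin (m * k) → ℝ) (i : Fin k) : ℝ :=
  v ⟨a.1 * k + i.1, by
    calc a.1 * k + i.1 < a.1 * k + k := Nat.add_lt_add_left i.2 _
      _ = (a.1 + 1) * k := by ring
      _ ≤ m * k := Nat.mul_le_mul_right k a.2⟩

/-- law of a standard Gaussian vector `N(0, I_d)` on `ℝ^d`. -/
def stdGaussianVec (d : ℕ) : Measure (Fin d → ℝ) :=
  Measure.pi fun _ => gaussianReal 0 1

/-- coordinate law `(1−ε)δ₀ + ε Q` of the mixture contamination noise. -/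
def mixture (ε : ℝ) (Q : Measure ℝ) : Measure ℝ :=
  ENNReal.ofReal (1 - ε) • Measure.dirac 0 + ENNReal.ofReal ε • Q

/-- action of the hidden-layer design matrix `A_W = [P_1X, …, P_mX] ∈ ℝ^{k×mn}`
(columns: the patch vectors `P_a x_s`) on a coefficient vector `u ∈ ℝ^{mn}`. -/
def AWapp (m n k : ℕ) (x : Fin n → Fin (m * k) → ℝ)
    (u : Fin m × Fin n → ℝ) (i : Fin k) : ℝ :=
  ∑ a : Fin m, ∑ s : Fin n, u (a, s) * patch m k a (x s) i

/-!
STATEMENT 5 (exact recovery of the hidden layer): `x_1,…,x_n` i.i.d. `N(0, I_d)`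
with `d = mk`; `W* = A_W u*` (here `u*` is a measurable function of the data);
`Θ = W* + z` with mixture contamination noise independent of the data.  For each
`δ ∈ (0,1)` there is `c(δ) > 0` such that if `√(mn/k) log(ek/(mn))/(1−ε) ≤ c(δ)`
then with probability at least `1 − δ` every minimizer `ũ` of `u ↦ ‖Θ − A_W u‖₁`
satisfies `A_W ũ = W*`.
-/

/-!
`ℓ¹` recovery holds as soon as, for the sign pattern `σ` of the noise and for every `v ≠ 0`,
`|∑ i, σ i ⟨G i, v⟩|` is smaller than `∑ |⟨G i, v⟩|` over the rows outside the support of the noise,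
`G` being the design matrix, whose entries are i.i.d. standard Gaussians. By Cauchy–Schwarz and
Markov's inequality, with high probability the left side is `O (√(mn k) ‖v‖)`. The right side is at
least a constant times `(1 - ε) k ‖v‖`: a Chernoff bound gives this simultaneously for all integer
points of an `ℓ¹` ball of radius proportional to `mn`, which number only `exp (O (mn))`, and any
other direction, suitably scaled, is rounded greedily to such a point with an error controlled by
the Frobenius norm of `G` alone. This avoids operator norms and loses no logarithm: recovery holds
already when `mn ≤ c (1 - ε)² k`. The signs of the noise take finitely many values and are
independent of the data, so a bound for each fixed `σ` suffices.
-/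

open WithLp
open scoped Matrix Finset

universe u v

section Probability

variable {Ω ι : Type*} [MeasurableSpace Ω] {μ : Measure Ω}

theorem measureReal_div_le_le_of_integral_le {f : Ω → ℝ} (hf : 0 ≤ f) (hint : Integrable f μ)
    {B t : ℝ} (hB : 0 < B) (ht : 0 < t) (hle : ∫ ω, f ω ∂μ ≤ B) :
    μ.real {ω | B / t ≤ f ω} ≤ t := by
  have markov := mul_meas_ge_le_integral_of_nonneg (.of_forall hf) hint (B / t)
  refine le_of_mul_le_mul_left (markov.trans ?_) (div_pos hB ht)
  rwa [div_mul_cancel₀ B ht.ne']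

theorem integrable_exp_mul_of_nonpos_of_nonneg [IsFiniteMeasure μ] {X : Ω → ℝ}
    (hm : AEMeasurable X μ) (hX : 0 ≤ X) {t : ℝ} (ht : t ≤ 0) :
    Integrable (fun ω => exp (t * X ω)) μ := by
  simpa using integrable_exp_mul_of_le (-t) 0 (neg_nonneg.2 ht) hm.neg
    (.of_forall fun ω => neg_nonpos.2 (hX ω))

theorem mgf_lt_one_of_neg [IsProbabilityMeasure μ] {X : Ω → ℝ} (hm : AEMeasurable X μ)
    (hX : 0 ≤ X) (hne : μ {ω | X ω ≠ 0} ≠ 0) {t : ℝ} (ht : t < 0) : mgf X μ t < 1 := by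
  have hint := integrable_exp_mul_of_nonpos_of_nonneg hm hX ht.le
  have hsupp : Function.support (fun ω => 1 - exp (t * X ω)) = {ω | X ω ≠ 0} := by
    ext ω
    simp [sub_eq_zero, eq_comm (a := (1 : ℝ)), ht.ne]
  have hpos : 0 < ∫ ω, (1 - exp (t * X ω)) ∂μ := by
    refine (integral_pos_iff_support_of_nonneg (fun ω => ?_) ((integrable_const 1).sub hint)).2 ?_
    · exact sub_nonneg.2 (exp_le_one_iff.2 (mul_nonpos_of_nonpos_of_nonneg ht.le (hX ω)))
    · exact hsupp ▸ pos_iff_ne_zero.2 hne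
  rw [integral_sub (integrable_const 1) hint, integral_const] at hpos
  simpa [mgf] using hpos

theorem measureReal_sum_le_le_exp_mul_pow [IsProbabilityMeasure μ] {X : ι → Ω → ℝ}
    (hindep : iIndepFun X μ) (hm : ∀ i, Measurable (X i)) (hX : ∀ i, 0 ≤ X i) (T : Finset ι)
    {q s : ℝ} (hs : 0 ≤ s) (hq : ∀ i ∈ T, mgf (X i) μ (-s) ≤ q) (a : ℝ) :
    μ.real {ω | ∑ i ∈ T, X i ω ≤ a} ≤ exp (s * a) * q ^ #T := by
  have hint : Integrable (fun ω => exp (-s * (∑ i ∈ T, X i) ω)) μ :=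
    integrable_exp_mul_of_nonpos_of_nonneg (by fun_prop) (Finset.sum_nonneg fun i _ => hX i)
      (neg_nonpos.2 hs)
  calc μ.real {ω | ∑ i ∈ T, X i ω ≤ a}
      = μ.real {ω | (∑ i ∈ T, X i) ω ≤ a} := by simp only [Finset.sum_apply]
    _ ≤ exp (s * a) * mgf (∑ i ∈ T, X i) μ (-s) := by
        simpa using measure_le_le_exp_mul_mgf a (neg_nonpos.2 hs) hint
    _ = exp (s * a) * ∏ i ∈ T, mgf (X i) μ (-s) := by rw [hindep.mgf_sum hm]
    _ ≤ exp (s * a) * q ^ #T := by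
        gcongr
        exact (Finset.prod_le_prod (fun _ _ => mgf_nonneg) hq).trans_eq (Finset.prod_const q)

theorem exp_neg_one_le : exp (-1) ≤ 2 / 5 := by
  have := exp_neg_one_lt_d9
  linarith

theorem mgf_indicator_one_neg_one_le [IsProbabilityMeasure μ] {A : Set Ω} (hA : MeasurableSet A)
    {η : ℝ} (hη : η ≤ μ.real A) :
    mgf (A.indicator 1) μ (-1) ≤ exp (-(3 / 5 * η)) := by
  have hind : ∀ ω, exp (-1 * A.indicator 1 ω) = 1 - (1 - exp (-1)) * A.indicator 1 ω := by
    intro ω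
    by_cases h : ω ∈ A <;> simp [h]
  have hint : Integrable (A.indicator (1 : Ω → ℝ)) μ := (integrable_const 1).indicator hA
  calc mgf (A.indicator 1) μ (-1) = 1 - (1 - exp (-1)) * μ.real A := by
        rw [mgf, integral_congr_ae (.of_forall hind), integral_sub (integrable_const 1)
          (hint.const_mul _), integral_const_mul, integral_indicator_one hA]
        simp
    _ ≤ 1 - 3 / 5 * η := by
        have := exp_neg_one_le
        nlinarith [measureReal_nonneg (μ := μ) (s := A)]
    _ ≤ exp (-(3 / 5 * η)) := one_sub_le_exp_neg _

theorem measureReal_pi_card_filter_mem_le_le [Fintype ι] {E : ι → Type*}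
    [∀ i, MeasurableSpace (E i)] {ν : ∀ i, Measure (E i)} [∀ i, IsProbabilityMeasure (ν i)]
    {A : ∀ i, Set (E i)} [∀ i, DecidablePred (· ∈ A i)] (hA : ∀ i, MeasurableSet (A i)) {η : ℝ}
    (hη : ∀ i, η ≤ (ν i).real (A i)) :
    (Measure.pi ν).real {x | (#{i | x i ∈ A i} : ℝ) ≤ η * Fintype.card ι / 2}
      ≤ exp (-(η * Fintype.card ι / 10)) := by
  let X : ι → (∀ i, E i) → ℝ := fun i x => (A i).indicator 1 (x i)
  have hX : ∀ i, Measurable ((A i).indicator (1 : E i → ℝ)) := fun i =>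
    measurable_one.indicator (hA i)
  have hindep : iIndepFun X (Measure.pi ν) :=
    iIndepFun_pi fun i => (hX i).aemeasurable
  have hmgf : ∀ i, mgf (X i) (Measure.pi ν) (-1) ≤ exp (-(3 / 5 * η)) := fun i => by
    have heval := measurePreserving_eval ν i
    exact mgf_indicator_one_neg_one_le (heval.measurable (hA i)) <|
      (hη i).trans_eq (heval.measureReal_preimage (hA i).nullMeasurableSet).symm
  have hcard : ∀ x, ∑ i, X i x = #{i | x i ∈ A i} := fun x => by
    simp [X, Set.indicator_apply]
  calc (Measure.pi ν).real {x | (#{i | x i ∈ A i} : ℝ) ≤ η * Fintype.card ι / 2}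
      = (Measure.pi ν).real {x | ∑ i, X i x ≤ η * Fintype.card ι / 2} := by simp only [hcard]
    _ ≤ exp (1 * (η * Fintype.card ι / 2)) * exp (-(3 / 5 * η)) ^ Fintype.card ι :=
        measureReal_sum_le_le_exp_mul_pow hindep (fun i => (hX i).comp (measurable_pi_apply i))
          (fun i x => Set.indicator_nonneg (fun _ _ => zero_le_one) (x i)) Finset.univ zero_le_one
          (fun i _ => hmgf i) _
    _ = exp (-(η * Fintype.card ι / 10)) := by
        rw [← exp_nat_mul, ← exp_add]
        ring_nf

theorem measure_prod_mem_comp_le {β S : Type*} [MeasurableSpace β] [Finite S] {ν : Measure β}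
    [IsProbabilityMeasure ν] {f : β → S} (hf : ∀ s, MeasurableSet (f ⁻¹' {s})) {B : S → Set Ω}
    {r : ENNReal} (hB : ∀ s, μ (B s) ≤ r) :
    (μ.prod ν) {ω | ω.1 ∈ B (f ω.2)} ≤ r := by
  have := Fintype.ofFinite S
  have hcover : {ω : Ω × β | ω.1 ∈ B (f ω.2)} ⊆ ⋃ s, B s ×ˢ (f ⁻¹' {s}) :=
    fun ω hω => Set.mem_iUnion.2 ⟨f ω.2, hω, rfl⟩
  calc (μ.prod ν) {ω | ω.1 ∈ B (f ω.2)}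
      ≤ ∑ s, (μ.prod ν) (B s ×ˢ (f ⁻¹' {s})) :=
        (measure_mono hcover).trans (measure_iUnion_fintype_le _ _)
    _ = ∑ s, μ (B s) * ν (f ⁻¹' {s}) := by simp only [Measure.prod_prod]
    _ ≤ ∑ s, r * ν (f ⁻¹' {s}) := by gcongr with s; exact hB s
    _ = r := by
        rw [← Finset.mul_sum, sum_measure_preimage_singleton _ fun s _ => hf s]
        simp

end Probability

section EuclideanNorm

variable {ι : Type*}

theorem norm_toLp_sq_le_card [Fintype ι] {v : ι → ℝ} (hv : ∀ i, |v i| ≤ 1) :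
    ‖toLp 2 v‖ ^ 2 ≤ Fintype.card ι := by
  rw [EuclideanSpace.real_norm_sq_eq]
  exact (Finset.sum_le_card_nsmul _ _ 1 fun i _ => (sq_le_one_iff_abs_le_one _).2 (hv i)).trans
    (by simp)

theorem sum_abs_le_sqrt_card_mul_sqrt_sum_sq (T : Finset ι) (f : ι → ℝ) :
    ∑ i ∈ T, |f i| ≤ √(#T) * √(∑ i ∈ T, f i ^ 2) := by
  simpa using sum_mul_le_sqrt_mul_sqrt T (fun _ => 1) fun i => |f i|

end EuclideanNorm

section Gaussian

variable {ι P : Type*} [Fintype P]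

/-- The law of a standard Gaussian vector of `ℝ^P`. -/
abbrev gaussianVec (P : Type*) [Fintype P] : Measure (P → ℝ) :=
  Measure.pi fun _ => gaussianReal 0 1

/-- The law of an `ι × P` matrix with i.i.d. standard Gaussian entries, given by its rows. -/
abbrev gaussianMatrix (ι P : Type*) [Fintype ι] [Fintype P] : Measure (ι → P → ℝ) :=
  Measure.pi fun _ => gaussianVec P

theorem map_dotProduct_gaussianVec (w : P → ℝ) :
    (gaussianVec P).map (fun g => g ⬝ᵥ w) = gaussianReal 0 (‖toLp 2 w‖₊ ^ 2) := by
  classical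
  let L := innerSL ℝ (toLp 2 w)
  have hcomp : (fun g : P → ℝ => g ⬝ᵥ w) = L ∘ toLp 2 := by
    ext g
    simp [L, EuclideanSpace.inner_toLp_toLp]
  have hvar : Var[L; stdGaussian (EuclideanSpace ℝ P)] = ‖toLp 2 w‖ ^ 2 := by
    rw [variance_dual_stdGaussian, innerSL_apply_norm]
  have hmean : (stdGaussian (EuclideanSpace ℝ P))[L] = 0 := integral_strongDual_stdGaussian L
  rw [hcomp, ← Measure.map_map (by fun_prop) (by fun_prop), map_pi_eq_stdGaussian,
    IsGaussian.map_eq_gaussianReal, hvar, hmean, Real.toNNReal_pow (norm_nonneg _), norm_toNNReal]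

theorem mgf_abs_dotProduct_gaussianVec (w : P → ℝ) (t : ℝ) :
    mgf (fun g => |g ⬝ᵥ w|) (gaussianVec P) t
      = mgf (fun x => |x|) (gaussianReal 0 1) (‖toLp 2 w‖ * t) := by
  have hscale : (gaussianReal 0 1).map (fun x => ‖toLp 2 w‖ * x)
      = gaussianReal 0 (‖toLp 2 w‖₊ ^ 2) := by
    rw [gaussianReal_map_const_mul]
    congr 1
    · simp
    · ext; simp
  have habs : mgf (fun g => |g ⬝ᵥ w|) (gaussianVec P) t
      = mgf (fun x => |x|) ((gaussianVec P).map (fun g => g ⬝ᵥ w)) t :=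
    (mgf_map (X := fun x => |x|) (by fun_prop) (by fun_prop)).symm
  rw [habs, map_dotProduct_gaussianVec, ← hscale, mgf_map (by fun_prop) (by fun_prop),
    ← mgf_const_mul]
  congr 1 with x
  simp [abs_mul]

/-- The rate `κ` in the small-ball estimate `P(∑ i ∈ T, |⟨G i, w⟩| ≤ κ |T| ‖w‖) ≤ exp(-κ |T|)` for
independent standard Gaussian vectors `G i`. -/
def smallBallRate : ℝ := -log (mgf (fun x => |x|) (gaussianReal 0 1) (-1)) / 2

theorem mgf_abs_gaussianReal_neg_one :
    mgf (fun x => |x|) (gaussianReal 0 1) (-1) = exp (-(2 * smallBallRate)) := by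
  have hint : Integrable (fun x : ℝ => exp (-1 * |x|)) (gaussianReal 0 1) :=
    integrable_exp_mul_of_nonpos_of_nonneg (by fun_prop) abs_nonneg (by norm_num)
  rw [smallBallRate, mul_div_cancel₀ _ two_ne_zero, neg_neg, exp_log (mgf_pos hint)]

theorem smallBallRate_pos : 0 < smallBallRate := by
  have hne : gaussianReal 0 1 {x | |x| ≠ 0} ≠ 0 := by
    have hsing := (nullSingletonClass_gaussianReal (μ := 0) one_ne_zero).measure_singleton 0
    have : {x : ℝ | |x| ≠ 0} = {0}ᶜ := by ext; simp
    rw [this, (prob_compl_eq_one_iff (measurableSet_singleton 0)).2 hsing]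
    exact one_ne_zero
  have hlt := mgf_lt_one_of_neg (by fun_prop) abs_nonneg hne neg_one_lt_zero
  rw [mgf_abs_gaussianReal_neg_one, exp_lt_one_iff] at hlt
  linarith

theorem integrable_dotProduct_sq_gaussianVec (w : P → ℝ) :
    Integrable (fun g => (g ⬝ᵥ w) ^ 2) (gaussianVec P) := by
  refine (integrable_map_measure (f := fun g => g ⬝ᵥ w) (g := fun x => x ^ 2) (by fun_prop)
    (by fun_prop)).1 ?_
  rw [map_dotProduct_gaussianVec]
  exact (memLp_id_gaussianReal 2).integrable_sq

theorem integral_dotProduct_sq_gaussianVec (w : P → ℝ) :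
    ∫ g, (g ⬝ᵥ w) ^ 2 ∂gaussianVec P = ‖toLp 2 w‖ ^ 2 := by
  have hmap := integral_map (μ := gaussianVec P) (φ := fun g => g ⬝ᵥ w) (f := fun x => x ^ 2)
    (by fun_prop) (by fun_prop)
  have hvar : Var[fun x => x; gaussianReal 0 (‖toLp 2 w‖₊ ^ 2)] = ‖toLp 2 w‖ ^ 2 := by simp
  rw [← hmap, map_dotProduct_gaussianVec, ← hvar, variance_of_integral_eq_zero (by fun_prop)]
  simp

variable [Fintype ι]

theorem measureReal_sum_abs_dotProduct_lt_le (T : Finset ι) (w : P → ℝ) :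
    (gaussianMatrix ι P).real
        {G | ∑ i ∈ T, |G i ⬝ᵥ w| < smallBallRate * #T * ‖toLp 2 w‖}
      ≤ exp (-(smallBallRate * #T)) := by
  rcases eq_or_ne w 0 with rfl | hw
  · simpa using (exp_pos _).le
  have hnorm : 0 < ‖toLp 2 w‖ := by simpa using hw
  have hindep : iIndepFun (fun i (G : ι → P → ℝ) => |G i ⬝ᵥ w|) (gaussianMatrix ι P) :=
    iIndepFun_pi (X := fun _ g => |g ⬝ᵥ w|) fun _ => by fun_prop
  have hmgf : ∀ i, mgf (fun G : ι → P → ℝ => |G i ⬝ᵥ w|) (gaussianMatrix ι P) (-‖toLp 2 w‖⁻¹)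
      = exp (-(2 * smallBallRate)) := fun i => by
    rw [← mgf_abs_gaussianReal_neg_one, ← mul_inv_cancel₀ hnorm.ne', ← mul_neg,
      ← mgf_abs_dotProduct_gaussianVec,
      ← (measurePreserving_eval (fun _ : ι => gaussianVec P) i).map_eq]
    exact (mgf_map (X := fun g => |g ⬝ᵥ w|) (measurable_pi_apply i).aemeasurable
      (by fun_prop)).symm
  calc _ ≤ (gaussianMatrix ι P).real
        {G | ∑ i ∈ T, |G i ⬝ᵥ w| ≤ smallBallRate * #T * ‖toLp 2 w‖} :=
        measureReal_mono (Set.ofPred_subset_ofPred.2 fun _ => le_of_lt)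
    _ ≤ exp (‖toLp 2 w‖⁻¹ * (smallBallRate * #T * ‖toLp 2 w‖))
        * exp (-(2 * smallBallRate)) ^ #T :=
        measureReal_sum_le_le_exp_mul_pow hindep (fun i => by fun_prop) (fun i G => abs_nonneg _) T
          (inv_nonneg.2 hnorm.le) (fun i _ => (hmgf i).le) _
    _ = exp (-(smallBallRate * #T)) := by
        rw [← exp_nat_mul, ← exp_add]
        field_simp
        ring_nf

theorem measurePreserving_col_gaussianMatrix (p : P) :
    MeasurePreserving (fun (G : ι → P → ℝ) i => G i p) (gaussianMatrix ι P) (gaussianVec ι) :=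
  measurePreserving_pi _ _ fun _ => measurePreserving_eval _ p

theorem integrable_col_dotProduct_sq_gaussianMatrix (σ : ι → ℝ) (p : P) :
    Integrable (fun G => ((fun i => G i p) ⬝ᵥ σ) ^ 2) (gaussianMatrix ι P) :=
  (measurePreserving_col_gaussianMatrix p).integrable_comp_of_integrable
    (integrable_dotProduct_sq_gaussianVec σ)

theorem integral_col_dotProduct_sq_gaussianMatrix (σ : ι → ℝ) (p : P) :
    ∫ G, ((fun i => G i p) ⬝ᵥ σ) ^ 2 ∂gaussianMatrix ι P = ‖toLp 2 σ‖ ^ 2 :=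
  ((measurePreserving_col_gaussianMatrix p).hasLaw.integral_comp (f := fun c => (c ⬝ᵥ σ) ^ 2)
    (by fun_prop)).trans (integral_dotProduct_sq_gaussianVec σ)

theorem norm_toLp_sum_smul_sq (σ : ι → ℝ) (G : ι → P → ℝ) :
    ‖toLp 2 (∑ i, σ i • G i)‖ ^ 2 = ∑ p, ((fun i => G i p) ⬝ᵥ σ) ^ 2 := by
  simp [EuclideanSpace.real_norm_sq_eq, dotProduct, mul_comm]

theorem integrable_norm_sum_smul_sq_gaussianMatrix (σ : ι → ℝ) :
    Integrable (fun G => ‖toLp 2 (∑ i, σ i • G i)‖ ^ 2) (gaussianMatrix ι P) := by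
  simp only [norm_toLp_sum_smul_sq]
  exact integrable_finsetSum _ fun p _ => integrable_col_dotProduct_sq_gaussianMatrix σ p

theorem integral_norm_sum_smul_sq_gaussianMatrix (σ : ι → ℝ) :
    ∫ G, ‖toLp 2 (∑ i, σ i • G i)‖ ^ 2 ∂gaussianMatrix ι P
      = Fintype.card P * ‖toLp 2 σ‖ ^ 2 := by
  simp only [norm_toLp_sum_smul_sq]
  rw [integral_finsetSum _ fun p _ => integrable_col_dotProduct_sq_gaussianMatrix σ p]
  simp [integral_col_dotProduct_sq_gaussianMatrix]

theorem measureReal_le_norm_sum_smul_sq_le [Nonempty ι] [Nonempty P] {σ : ι → ℝ}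
    (hσ : ∀ i, |σ i| ≤ 1) {t : ℝ} (ht : 0 < t) :
    (gaussianMatrix ι P).real
        {G | Fintype.card P * Fintype.card ι / t ≤ ‖toLp 2 (∑ i, σ i • G i)‖ ^ 2} ≤ t := by
  refine measureReal_div_le_le_of_integral_le (fun _ => sq_nonneg _)
    (integrable_norm_sum_smul_sq_gaussianMatrix σ)
    (mul_pos (Nat.cast_pos.2 Fintype.card_pos) (Nat.cast_pos.2 Fintype.card_pos)) ht ?_
  rw [integral_norm_sum_smul_sq_gaussianMatrix]
  gcongr
  exact norm_toLp_sq_le_card hσ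

theorem measureReal_le_sum_norm_sq_le [Nonempty P] {T : Finset ι} (hT : T.Nonempty) {t : ℝ}
    (ht : 0 < t) :
    (gaussianMatrix ι P).real
        {G | Fintype.card P * #T / t ≤ ∑ i ∈ T, ‖toLp 2 (G i)‖ ^ 2} ≤ t := by
  classical
  have hsingle : ∀ (i : ι) (G : ι → P → ℝ), ∑ j, (Pi.single i 1 : ι → ℝ) j • G j = G i :=
    fun i G => by simp [Pi.single_apply]
  have hint : ∀ i, Integrable (fun G => ‖toLp 2 (G i)‖ ^ 2) (gaussianMatrix ι P) := fun i => by
    simpa only [hsingle] using integrable_norm_sum_smul_sq_gaussianMatrix (P := P) (Pi.single i 1)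
  have hval : ∀ i, ∫ G, ‖toLp 2 (G i)‖ ^ 2 ∂gaussianMatrix ι P = Fintype.card P := fun i => by
    simpa [hsingle] using integral_norm_sum_smul_sq_gaussianMatrix (P := P) (Pi.single i 1)
  refine measureReal_div_le_le_of_integral_le (fun _ => Finset.sum_nonneg fun i _ => sq_nonneg _)
    (integrable_finsetSum _ fun i _ => hint i)
    (mul_pos (Nat.cast_pos.2 Fintype.card_pos) (Nat.cast_pos.2 hT.card_pos)) ht ?_
  rw [integral_finsetSum _ fun i _ => hint i]
  simp [hval, mul_comm]

end Gaussian

section Rounding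

variable {ι P : Type*}

theorem exists_int_abs_sub_le_one_mul_nonpos (x y : ℝ) :
    ∃ c : ℤ, |x - c| ≤ 1 ∧ (x - c) * y ≤ 0 := by
  rcases le_total 0 y with hy | hy
  · refine ⟨⌈x⌉, abs_le.2 ⟨?_, ?_⟩, mul_nonpos_of_nonpos_of_nonneg ?_ hy⟩ <;>
      linarith [Int.le_ceil x, Int.ceil_lt_add_one x]
  · refine ⟨⌊x⌋, abs_le.2 ⟨?_, ?_⟩, mul_nonpos_of_nonneg_of_nonpos ?_ hy⟩ <;>
      linarith [Int.floor_le x, Int.lt_floor_add_one x]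

/- Greedy choice: each coordinate is rounded up or down so that its error makes an obtuse angle
with the error accumulated so far, so only the diagonal terms survive. -/
theorem exists_int_norm_sum_sub_smul_sq_le {E : Type*} [NormedAddCommGroup E]
    [InnerProductSpace ℝ E] (g : P → E) (v : P → ℝ) (S : Finset P) :
    ∃ z : P → ℤ, (∀ p, |v p - z p| ≤ 1) ∧
      ‖∑ p ∈ S, (v p - z p) • g p‖ ^ 2 ≤ ∑ p ∈ S, ‖g p‖ ^ 2 := by
  classical
  induction S using Finset.induction_on with
  | empty =>
    choose z hz _ using fun p => exists_int_abs_sub_le_one_mul_nonpos (v p) 0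
    exact ⟨z, hz, by simp⟩
  | insert a S ha ih =>
    obtain ⟨z, hz, hle⟩ := ih
    set e := ∑ p ∈ S, (v p - z p) • g p
    obtain ⟨c, hc, hobtuse⟩ := exists_int_abs_sub_le_one_mul_nonpos (v a) (inner ℝ (g a) e)
    refine ⟨Function.update z a c, fun p => ?_, ?_⟩
    · rcases eq_or_ne p a with rfl | hp
      · simpa using hc
      · simpa [hp] using hz p
    have hrest : ∑ p ∈ S, (v p - Function.update z a c p) • g p = e :=
      Finset.sum_congr rfl fun p hp => by simp [ne_of_mem_of_not_mem hp ha]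
    have hstep : ‖(v a - c) • g a‖ ^ 2 ≤ ‖g a‖ ^ 2 := by
      rw [norm_smul, mul_pow]
      exact mul_le_of_le_one_left (sq_nonneg _) (pow_le_one₀ (norm_nonneg _) hc)
    rw [Finset.sum_insert ha, Finset.sum_insert ha, hrest, Function.update_self,
      norm_add_sq_real, real_inner_smul_left]
    linarith

theorem exists_int_sum_dotProduct_sub_sq_le [Fintype P] (G : ι → P → ℝ) (T : Finset ι)
    (v : P → ℝ) :
    ∃ z : P → ℤ, (∀ p, |v p - z p| ≤ 1) ∧
      ∑ i ∈ T, (G i ⬝ᵥ fun p => v p - z p) ^ 2 ≤ ∑ i ∈ T, ‖toLp 2 (G i)‖ ^ 2 := by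
  obtain ⟨z, hz, hle⟩ := exists_int_norm_sum_sub_smul_sq_le
    (fun p => toLp 2 fun i : T => G i p) v Finset.univ
  refine ⟨z, hz, ?_⟩
  simp only [EuclideanSpace.real_norm_sq_eq] at hle ⊢
  rw [Finset.sum_comm] at hle
  simp only [← Finset.sum_coe_sort T]
  simpa [dotProduct, mul_comm] using hle

end Rounding

section LatticeBall

theorem hasSum_half_pow_natAbs : HasSum (fun z : ℤ => (1 / 2 : ℝ) ^ z.natAbs) 3 := by
  have hneg : HasSum (fun n : ℕ => (1 / 2 : ℝ) ^ (-((n : ℤ) + 1)).natAbs) 1 := by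
    convert hasSum_geometric_two' 1 using 2 with n
    rw [Int.natAbs_neg, ← Nat.cast_succ, Int.natAbs_natCast, pow_succ', one_div_pow, mul_one_div]
  have := HasSum.of_nat_of_neg_add_one (f := fun z : ℤ => (1 / 2 : ℝ) ^ z.natAbs)
    (by simpa using hasSum_geometric_two) hneg
  norm_num at this
  exact this

/-- The integer points of the `ℓ¹` ball of radius `R` in `ℝ^P`. -/
def intL1Ball (P : Type*) [Fintype P] [DecidableEq P] (R : ℕ) : Finset (P → ℤ) :=
  {z ∈ Fintype.piFinset fun _ => Finset.Icc (-R : ℤ) R | ∑ p, (z p).natAbs ≤ R}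

variable {P : Type*} [Fintype P] [DecidableEq P] {R : ℕ}

theorem mem_intL1Ball {z : P → ℤ} : z ∈ intL1Ball P R ↔ ∑ p, (z p).natAbs ≤ R := by
  refine ⟨fun h => (Finset.mem_filter.1 h).2, fun h => Finset.mem_filter.2 ⟨?_, h⟩⟩
  refine Fintype.mem_piFinset.2 fun p => ?_
  have : (z p).natAbs ≤ ∑ p, (z p).natAbs :=
    Finset.single_le_sum (f := fun p => (z p).natAbs) (fun _ _ => Nat.zero_le _) (Finset.mem_univ p)
  rw [Finset.mem_Icc]
  omega

theorem card_intL1Ball_le : (#(intL1Ball P R) : ℝ) ≤ 2 ^ R * 3 ^ Fintype.card P := by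
  have hle : #(intL1Ball P R) * (1 / 2 : ℝ) ^ R ≤ 3 ^ Fintype.card P :=
    calc #(intL1Ball P R) * (1 / 2 : ℝ) ^ R
        ≤ ∑ z ∈ intL1Ball P R, ∏ p, (1 / 2 : ℝ) ^ (z p).natAbs := by
          rw [← nsmul_eq_mul]
          refine Finset.card_nsmul_le_sum _ _ _ fun z hz => ?_
          rw [Finset.prod_pow_eq_pow_sum]
          exact pow_le_pow_of_le_one (by norm_num) (by norm_num) (mem_intL1Ball.1 hz)
      _ ≤ ∑ z ∈ Fintype.piFinset fun _ : P => Finset.Icc (-R : ℤ) R,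
            ∏ p, (1 / 2 : ℝ) ^ (z p).natAbs :=
          Finset.sum_le_sum_of_subset_of_nonneg (Finset.filter_subset _ _)
            fun _ _ _ => by positivity
      _ = (∑ a ∈ Finset.Icc (-R : ℤ) R, (1 / 2 : ℝ) ^ a.natAbs) ^ Fintype.card P := by
          rw [← Finset.card_univ, ← Finset.prod_const, Finset.prod_univ_sum]
      _ ≤ 3 ^ Fintype.card P := by
          gcongr
          exact sum_le_hasSum _ (fun _ _ => by positivity) hasSum_half_pow_natAbs
  rw [one_div, inv_pow, ← div_eq_mul_inv, div_le_iff₀ (by positivity)] at hle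
  rwa [mul_comm]

end LatticeBall

section LowerBound

variable {ι P : Type*} [Fintype P] {v : P → ℝ} {z : P → ℤ}

theorem mem_intL1Ball_of_abs_sub_le_one [DecidableEq P] {D : ℕ}
    (hv : ∑ p, |v p| ≤ D * Fintype.card P) (hz : ∀ p, |v p - z p| ≤ 1) :
    z ∈ intL1Ball P ((D + 1) * Fintype.card P) := by
  have hcoord : ∀ p, ((z p).natAbs : ℝ) ≤ |v p| + 1 := fun p => by
    rw [Nat.cast_natAbs, Int.cast_abs]
    linarith [abs_sub_abs_le_abs_sub (z p : ℝ) (v p), abs_sub_comm (v p) (z p), hz p]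
  have hsum : ((∑ p, (z p).natAbs : ℕ) : ℝ) ≤ ((D + 1) * Fintype.card P : ℕ) := by
    push_cast
    calc ∑ p, ((z p).natAbs : ℝ) ≤ ∑ p, (|v p| + 1) := Finset.sum_le_sum fun p _ => hcoord p
      _ = ∑ p, |v p| + Fintype.card P := by simp [Finset.sum_add_distrib]
      _ ≤ (D + 1) * Fintype.card P := by linarith
  exact mem_intL1Ball.2 (mod_cast hsum)

theorem half_norm_le_norm_of_abs_sub_le_one (hv : 2 * √(Fintype.card P) ≤ ‖toLp 2 v‖)
    (hz : ∀ p, |v p - z p| ≤ 1) : ‖toLp 2 v‖ / 2 ≤ ‖toLp 2 fun p => (z p : ℝ)‖ := by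
  have herr : ‖toLp 2 v - toLp 2 fun p => (z p : ℝ)‖ ≤ √(Fintype.card P) :=
    le_sqrt_of_sq_le (norm_toLp_sq_le_card hz)
  linarith [norm_sub_norm_le (toLp 2 v) (toLp 2 fun p => (z p : ℝ))]

variable {G : ι → P → ℝ} {T : Finset ι} {κ τ : ℝ} {D : ℕ}

theorem exists_int_sum_abs_dotProduct_sub_le
    (hfrob : ∑ i ∈ T, ‖toLp 2 (G i)‖ ^ 2 ≤ Fintype.card P * #T * τ) (v : P → ℝ) :
    ∃ z : P → ℤ, (∀ p, |v p - z p| ≤ 1) ∧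
      ∑ i ∈ T, |G i ⬝ᵥ (fun p => v p - z p)| ≤ #T * √(Fintype.card P) * √τ := by
  obtain ⟨z, hz, hround⟩ := exists_int_sum_dotProduct_sub_sq_le G T v
  refine ⟨z, hz, ?_⟩
  calc ∑ i ∈ T, |G i ⬝ᵥ (fun p => v p - z p)|
      ≤ √(#T) * √(Fintype.card P * #T * τ) :=
        (sum_abs_le_sqrt_card_mul_sqrt_sum_sq T _).trans (by gcongr; exact hround.trans hfrob)
    _ = #T * √(Fintype.card P) * √τ := by
        rw [sqrt_mul (by positivity), sqrt_mul (by positivity)]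
        linear_combination √(Fintype.card P) * √τ * mul_self_sqrt (Nat.cast_nonneg (α := ℝ) #T)

theorem sum_abs_dotProduct_intCast_le :
    ∑ i ∈ T, |G i ⬝ᵥ (fun p => (z p : ℝ))|
      ≤ ∑ i ∈ T, |G i ⬝ᵥ v| + ∑ i ∈ T, |G i ⬝ᵥ (fun p => v p - z p)| := by
  rw [← Finset.sum_add_distrib]
  refine Finset.sum_le_sum fun i _ => ?_
  have hsplit : G i ⬝ᵥ (fun p => (z p : ℝ)) = G i ⬝ᵥ v - G i ⬝ᵥ (fun p => v p - z p) := by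
    rw [← dotProduct_sub]
    simp [Pi.sub_def]
  rw [hsplit]
  exact abs_sub _ _

theorem le_sum_abs_dotProduct_of_norm_eq [DecidableEq P] (hD : 2 ≤ D)
    (hτ : 4 * √τ ≤ κ * D)
    (hfrob : ∑ i ∈ T, ‖toLp 2 (G i)‖ ^ 2 ≤ Fintype.card P * #T * τ)
    (hnet : ∀ z ∈ intL1Ball P ((D + 1) * Fintype.card P),
      κ * #T * ‖toLp 2 fun p => (z p : ℝ)‖ ≤ ∑ i ∈ T, |G i ⬝ᵥ (fun p => (z p : ℝ))|)
    (hv : ‖toLp 2 v‖ = D * √(Fintype.card P)) :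
    κ / 4 * #T * ‖toLp 2 v‖ ≤ ∑ i ∈ T, |G i ⬝ᵥ v| := by
  have hD' : (2 : ℝ) ≤ D := mod_cast hD
  have hκ : 0 ≤ κ := by nlinarith [sqrt_nonneg τ]
  obtain ⟨z, hz, herr⟩ := exists_int_sum_abs_dotProduct_sub_le hfrob v
  have hv1 : ∑ p, |v p| ≤ D * Fintype.card P := by
    refine (sum_abs_le_sqrt_card_mul_sqrt_sum_sq Finset.univ v).trans_eq ?_
    rw [← EuclideanSpace.real_norm_sq_eq (toLp 2 v), sqrt_sq (norm_nonneg _), hv, Finset.card_univ,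
      mul_left_comm, mul_self_sqrt (Nat.cast_nonneg _)]
  have hhalf : ‖toLp 2 v‖ / 2 ≤ ‖toLp 2 fun p => (z p : ℝ)‖ :=
    half_norm_le_norm_of_abs_sub_le_one (by rw [hv]; gcongr) hz
  have hlower := (hnet z (mem_intL1Ball_of_abs_sub_le_one hv1 hz)).trans
    (sum_abs_dotProduct_intCast_le (v := v))
  have hnorm : κ * #T * (‖toLp 2 v‖ / 2) ≤ κ * #T * ‖toLp 2 fun p => (z p : ℝ)‖ := by gcongr
  have hτ' : #T * √(Fintype.card P) * (4 * √τ) ≤ #T * √(Fintype.card P) * (κ * D) := by gcongr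
  rw [hv] at hnorm ⊢
  linarith

theorem le_sum_abs_dotProduct_of_intL1Ball [DecidableEq P] (hD : 2 ≤ D) (hτ : 4 * √τ ≤ κ * D)
    (hfrob : ∑ i ∈ T, ‖toLp 2 (G i)‖ ^ 2 ≤ Fintype.card P * #T * τ)
    (hnet : ∀ z ∈ intL1Ball P ((D + 1) * Fintype.card P),
      κ * #T * ‖toLp 2 fun p => (z p : ℝ)‖ ≤ ∑ i ∈ T, |G i ⬝ᵥ (fun p => (z p : ℝ))|) (v : P → ℝ) :
    κ / 4 * #T * ‖toLp 2 v‖ ≤ ∑ i ∈ T, |G i ⬝ᵥ v| := by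
  rcases eq_or_ne v 0 with rfl | hv
  · simp
  obtain ⟨p, -⟩ := Function.ne_iff.1 hv
  have : Nonempty P := ⟨p⟩
  have hnorm : 0 < ‖toLp 2 v‖ := by simpa using hv
  set α := D * √(Fintype.card P) / ‖toLp 2 v‖ with hα
  have hα0 : 0 < α := by positivity
  have hscale : ‖toLp 2 (α • v)‖ = α * ‖toLp 2 v‖ := by
    rw [toLp_smul, norm_smul, norm_of_nonneg hα0.le]
  have h := le_sum_abs_dotProduct_of_norm_eq hD hτ hfrob hnet (v := α • v)
    (by rw [hscale, hα, div_mul_cancel₀ _ hnorm.ne'])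
  simp only [hscale, dotProduct_smul, smul_eq_mul, abs_mul, abs_of_pos hα0, ← Finset.mul_sum] at h
  rw [mul_left_comm] at h
  exact le_of_mul_le_mul_left h hα0

end LowerBound

section NullSpace

variable {ι P : Type*} [Fintype ι] [Fintype P]

/-- The null-space property of the matrix with rows `G i` relative to a sign pattern `σ`. When `σ`
is the sign pattern of the noise `z`, the left side bounds the first-order decrease of `‖z - G v‖₁`
on the support of `z`, and the right side is the increase off the support. -/
def NullSpaceProperty (G : ι → P → ℝ) (σ : ι → SignType) : Prop :=
  ∀ v ≠ 0, |∑ i, (σ i : ℝ) * (G i ⬝ᵥ v)| < ∑ i with σ i = 0, |G i ⬝ᵥ v|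

variable {G : ι → P → ℝ} {σ : ι → SignType}

theorem nullSpaceProperty_of_norm_lt {a : ℝ} (hcross : ‖toLp 2 (∑ i, (σ i : ℝ) • G i)‖ < a)
    (hlower : ∀ v, a * ‖toLp 2 v‖ ≤ ∑ i with σ i = 0, |G i ⬝ᵥ v|) : NullSpaceProperty G σ := by
  intro v hv
  have hnorm : 0 < ‖toLp 2 v‖ := by simpa using hv
  calc |∑ i, (σ i : ℝ) * (G i ⬝ᵥ v)|
      = |inner ℝ (toLp 2 (∑ i, (σ i : ℝ) • G i)) (toLp 2 v)| := by
        rw [EuclideanSpace.inner_toLp_toLp, star_trivial, dotProduct_comm, sum_dotProduct]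
        simp only [smul_dotProduct, smul_eq_mul]
    _ ≤ ‖toLp 2 (∑ i, (σ i : ℝ) • G i)‖ * ‖toLp 2 v‖ := abs_real_inner_le_norm _ _
    _ < a * ‖toLp 2 v‖ := by gcongr
    _ ≤ ∑ i with σ i = 0, |G i ⬝ᵥ v| := hlower v

theorem abs_sub_sign_mul_add_ite_le (z a : ℝ) :
    |z| - SignType.sign z * a + (if SignType.sign z = 0 then |a| else 0) ≤ |z - a| := by
  rcases lt_trichotomy z 0 with hz | rfl | hz
  · simpa [sign_neg hz, abs_of_neg hz, add_comm] using neg_le_abs (z - a)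
  · simp
  · simpa [sign_pos hz, abs_of_pos hz] using le_abs_self (z - a)

theorem NullSpaceProperty.eq_of_sum_abs_le {z : ι → ℝ}
    (h : NullSpaceProperty G fun i => SignType.sign (z i)) {u v : P → ℝ}
    (hle : ∑ i, |G i ⬝ᵥ u + z i - G i ⬝ᵥ v| ≤ ∑ i, |z i|) : v = u := by
  by_contra hne
  have hnull := h (v - u) (sub_ne_zero.2 hne)
  have hsum := Finset.sum_le_sum fun i (_ : i ∈ Finset.univ) =>
    abs_sub_sign_mul_add_ite_le (z i) (G i ⬝ᵥ (v - u))
  rw [Finset.sum_add_distrib, Finset.sum_sub_distrib, ← Finset.sum_filter] at hsum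
  have hres : ∀ i, z i - G i ⬝ᵥ (v - u) = G i ⬝ᵥ u + z i - G i ⬝ᵥ v := fun i => by
    rw [dotProduct_sub]
    ring
  simp only [hres] at hsum
  linarith [le_abs_self (∑ i, (SignType.sign (z i) : ℝ) * (G i ⬝ᵥ (v - u)))]

end NullSpace

section FailureProbability

theorem two_pow_mul_three_pow_le_exp (D N : ℕ) :
    (2 : ℝ) ^ ((D + 1) * N) * 3 ^ N ≤ exp ((D + 3) * N) :=
  calc (2 : ℝ) ^ ((D + 1) * N) * 3 ^ N ≤ 2 ^ ((D + 1) * N) * 4 ^ N := by gcongr; norm_num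
    _ = 2 ^ ((D + 3) * N) := by
        rw [show (4 : ℝ) = 2 ^ 2 by norm_num, ← pow_mul, ← pow_add]
        ring_nf
    _ ≤ exp 1 ^ ((D + 3) * N) := by gcongr; linarith [exp_one_gt_d9]
    _ = exp ((D + 3) * N) := by rw [← exp_nat_mul]; push_cast; ring_nf

variable {ι P : Type*} [Fintype P] {T : Finset ι} {D : ℕ} {t : ℝ}

theorem nonempty_of_mul_card_le [Nonempty P]
    (hT : (D + 3 + |log t|) * Fintype.card P ≤ smallBallRate * #T) : T.Nonempty := by
  have hpos : 0 < smallBallRate * #T := lt_of_lt_of_le (by positivity) hT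
  exact Finset.card_pos.1 (Nat.cast_pos.1 (pos_of_mul_pos_right hpos smallBallRate_pos.le))

variable [Fintype ι]

theorem measureReal_exists_intL1Ball_lt_le [DecidableEq P] [Nonempty P] (ht : 0 < t)
    (hT : (D + 3 + |log t|) * Fintype.card P ≤ smallBallRate * #T) :
    (gaussianMatrix ι P).real {G | ∃ z ∈ intL1Ball P ((D + 1) * Fintype.card P),
      ∑ i ∈ T, |G i ⬝ᵥ (fun p => (z p : ℝ))|
        < smallBallRate * #T * ‖toLp 2 fun p => (z p : ℝ)‖} ≤ t := by
  have hlog : -log t ≤ |log t| * Fintype.card P :=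
    (neg_le_abs _).trans (le_mul_of_one_le_right (abs_nonneg _)
      (Nat.one_le_cast.2 Fintype.card_pos))
  calc _ = (gaussianMatrix ι P).real (⋃ z ∈ intL1Ball P ((D + 1) * Fintype.card P),
        {G | ∑ i ∈ T, |G i ⬝ᵥ (fun p => (z p : ℝ))|
          < smallBallRate * #T * ‖toLp 2 fun p => (z p : ℝ)‖}) := by
        congr 1
        ext G
        simp
    _ ≤ ∑ _z ∈ intL1Ball P ((D + 1) * Fintype.card P), exp (-(smallBallRate * #T)) :=
        (measureReal_biUnion_finset_le _ _).trans
          (Finset.sum_le_sum fun z _ => measureReal_sum_abs_dotProduct_lt_le T _)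
    _ = #(intL1Ball P ((D + 1) * Fintype.card P)) * exp (-(smallBallRate * #T)) := by simp
    _ ≤ exp ((D + 3) * Fintype.card P) * exp (-(smallBallRate * #T)) := by
        gcongr
        exact card_intL1Ball_le.trans (two_pow_mul_three_pow_le_exp D _)
    _ ≤ exp (log t) := by
        rw [← exp_add]
        exact exp_le_exp.2 (by linarith)
    _ = t := exp_log ht

theorem measureReal_not_le_sum_abs_dotProduct_le [Nonempty P] (ht : 0 < t) (hD : 2 ≤ D)
    (hDt : 4 * √t⁻¹ ≤ smallBallRate * D)
    (hT : (D + 3 + |log t|) * Fintype.card P ≤ smallBallRate * #T) :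
    (gaussianMatrix ι P).real
      {G | ¬ ∀ v, smallBallRate / 4 * #T * ‖toLp 2 v‖ ≤ ∑ i ∈ T, |G i ⬝ᵥ v|} ≤ 2 * t := by
  classical
  have hsub : {G : ι → P → ℝ | ¬ ∀ v, smallBallRate / 4 * #T * ‖toLp 2 v‖ ≤ ∑ i ∈ T, |G i ⬝ᵥ v|}
      ⊆ {G | Fintype.card P * #T / t ≤ ∑ i ∈ T, ‖toLp 2 (G i)‖ ^ 2}
        ∪ {G | ∃ z ∈ intL1Ball P ((D + 1) * Fintype.card P),
          ∑ i ∈ T, |G i ⬝ᵥ (fun p => (z p : ℝ))|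
            < smallBallRate * #T * ‖toLp 2 fun p => (z p : ℝ)‖} := by
    intro G hG
    by_contra hgood
    simp only [Set.mem_union, Set.mem_ofPred_eq, not_or, not_le, not_exists, not_and,
      not_lt] at hgood
    exact hG (le_sum_abs_dotProduct_of_intL1Ball hD hDt
      (hgood.1.le.trans_eq (div_eq_mul_inv _ _)) hgood.2)
  calc _ ≤ t + t := (measureReal_mono hsub).trans <| (measureReal_union_le _ _).trans <|
        add_le_add (measureReal_le_sum_norm_sq_le (nonempty_of_mul_card_le hT) ht)
          (measureReal_exists_intL1Ball_lt_le ht hT)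
    _ = 2 * t := (two_mul t).symm

variable {σ : ι → SignType}

theorem measureReal_not_nullSpaceProperty_le [Nonempty P] (ht : 0 < t) (hD : 2 ≤ D)
    (hDt : 4 * √t⁻¹ ≤ smallBallRate * D)
    (hσ : (D + 3 + |log t|) * Fintype.card P ≤ smallBallRate * #{i | σ i = 0})
    (hcross : Fintype.card P * Fintype.card ι / t ≤ (smallBallRate / 4 * #{i | σ i = 0}) ^ 2) :
    (gaussianMatrix ι P).real {G | ¬ NullSpaceProperty G σ} ≤ 3 * t := by
  have hκ := smallBallRate_pos
  have : Nonempty ι := (nonempty_of_mul_card_le hσ).to_type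
  have habs : ∀ i, |(σ i : ℝ)| ≤ 1 := fun i => by
    cases σ i <;> simp
  have hsub : {G : ι → P → ℝ | ¬ NullSpaceProperty G σ}
      ⊆ {G | Fintype.card P * Fintype.card ι / t ≤ ‖toLp 2 (∑ i, (σ i : ℝ) • G i)‖ ^ 2}
        ∪ {G | ¬ ∀ v, smallBallRate / 4 * #{i | σ i = 0} * ‖toLp 2 v‖
          ≤ ∑ i with σ i = 0, |G i ⬝ᵥ v|} := by
    intro G hG
    by_contra hgood
    simp only [Set.mem_union, Set.mem_ofPred_eq, not_or, not_le, not_not] at hgood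
    exact hG (nullSpaceProperty_of_norm_lt
      (lt_of_pow_lt_pow_left₀ 2 (by positivity) (hgood.1.trans_le hcross)) hgood.2)
  calc _ ≤ t + 2 * t := (measureReal_mono hsub).trans <| (measureReal_union_le _ _).trans <|
        add_le_add (measureReal_le_norm_sum_smul_sq_le habs ht)
          (measureReal_not_le_sum_abs_dotProduct_le ht hD hDt hσ)
    _ = 3 * t := by ring

theorem exists_pos_forall_measureReal_not_nullSpaceProperty_le (ht : 0 < t) :
    ∃ c : ℝ, 0 < c ∧ ∀ (ι : Type u) (P : Type v) [Fintype ι] [Fintype P] [Nonempty P]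
      (σ : ι → SignType) (η : ℝ), 0 ≤ η → η * Fintype.card ι / 2 < #{i | σ i = 0} →
      Fintype.card P ≤ c * η ^ 2 * Fintype.card ι →
      (gaussianMatrix ι P).real {G | ¬ NullSpaceProperty G σ} ≤ 3 * t := by
  have hκ := smallBallRate_pos
  obtain ⟨D, hDκ⟩ := exists_nat_ge (max 2 (4 * √t⁻¹ / smallBallRate))
  have hD : 2 ≤ D := by exact_mod_cast (le_max_left _ _).trans hDκ
  have hDt : 4 * √t⁻¹ ≤ smallBallRate * D :=
    (div_le_iff₀' hκ).1 ((le_max_right _ _).trans hDκ)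
  set A : ℝ := D + 3 + |log t|
  have hA0 : 0 < A := by positivity
  refine ⟨min (smallBallRate ^ 2 * t / 64) (smallBallRate / (4 * A)), by positivity, ?_⟩
  intro ι P _ _ _ σ η hη hσ hP
  set k : ℝ := (Fintype.card ι : ℝ)
  set M : ℝ := (#{i | σ i = 0} : ℝ)
  have hMk : M ≤ k := Nat.cast_le.2 (Finset.card_le_univ _)
  have hηk : η * k ≤ 2 * M := by linarith
  have hk : 0 < k := lt_of_lt_of_le (lt_of_le_of_lt (by positivity) hσ) hMk
  have hη2 : η ≤ 2 := le_of_mul_le_mul_right (by linarith) hk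
  have hrows : A * Fintype.card P ≤ smallBallRate * M := by
    calc A * Fintype.card P ≤ A * (smallBallRate / (4 * A) * η ^ 2 * k) := by
          gcongr
          exact hP.trans (by gcongr; exact min_le_right _ _)
      _ = smallBallRate / 4 * (η * (η * k)) := by field_simp
      _ ≤ smallBallRate / 4 * (2 * (2 * M)) := by gcongr
      _ = smallBallRate * M := by ring
  refine measureReal_not_nullSpaceProperty_le ht hD hDt hrows ?_
  calc Fintype.card P * k / t ≤ smallBallRate ^ 2 * t / 64 * η ^ 2 * k * k / t := by
        gcongr
        exact hP.trans (by gcongr; exact min_le_left _ _)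
    _ = (smallBallRate / 8 * (η * k)) ^ 2 := by field_simp; ring
    _ ≤ (smallBallRate / 8 * (2 * M)) ^ 2 := by gcongr
    _ = (smallBallRate / 4 * M) ^ 2 := by ring

end FailureProbability

section RandomSigns

theorem measurableSet_sign_comp_preimage_singleton {ι : Type*} [Countable ι] (σ : ι → SignType) :
    MeasurableSet ((fun (z : ι → ℝ) i => SignType.sign (z i)) ⁻¹' {σ}) := by
  have hfib : ∀ i, MeasurableSet ((SignType.sign : ℝ → SignType) ⁻¹' {σ i}) := fun i =>
    (Set.ordConnected_singleton.preimage_mono SignType.sign.monotone).measurableSet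
  convert MeasurableSet.iInter fun i => measurable_pi_apply (X := fun _ : ι => ℝ) i (hfib i)
  ext z
  simp [funext_iff]

theorem exp_neg_mul_div_ten_le {c η k N : ℝ} (hη0 : 0 ≤ η) (hη1 : η ≤ 1) (hk : 0 ≤ k)
    (hc : 0 ≤ c) (hN : 1 ≤ N) (hle : N ≤ c * η ^ 2 * k) : exp (-(η * k / 10)) ≤ 10 * c := by
  have hexp : η * k / 10 ≤ exp (η * k / 10) := by linarith [add_one_le_exp (η * k / 10)]
  rw [exp_neg, inv_le_iff_one_le_mul₀ (exp_pos _)]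
  calc 1 ≤ c * η ^ 2 * k := hN.trans hle
    _ = c * (η * (η * k)) := by ring
    _ ≤ c * (1 * (η * k)) := by gcongr
    _ = 10 * c * (η * k / 10) := by ring
    _ ≤ 10 * c * exp (η * k / 10) := by gcongr

theorem measure_not_nullSpaceProperty_sign_le {ι P : Type*} [Fintype ι] [Fintype P]
    {ν : Measure (ι → ℝ)} [IsProbabilityMeasure ν] {M a b : ℝ} (hb : 0 ≤ b)
    (hfew : ν.real {z | (#{i | z i = 0} : ℝ) ≤ M} ≤ a)
    (hnull : ∀ σ : ι → SignType, M < #{i | σ i = 0} →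
      (gaussianMatrix ι P).real {G | ¬ NullSpaceProperty G σ} ≤ b) :
    ((gaussianMatrix ι P).prod ν) {ω | ¬ NullSpaceProperty ω.1 fun i => SignType.sign (ω.2 i)}
      ≤ ENNReal.ofReal (a + b) := by
  classical
  let bad (σ : ι → SignType) : Set (ι → P → ℝ) :=
    {G | M < #{i | σ i = 0} ∧ ¬ NullSpaceProperty G σ}
  have hbad (σ : ι → SignType) : gaussianMatrix ι P (bad σ) ≤ ENNReal.ofReal b := by
    rw [← ofReal_measureReal]
    refine ENNReal.ofReal_le_ofReal ?_
    by_cases hM : M < #{i | σ i = 0}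
    · simpa only [bad, hM, true_and] using hnull σ hM
    · simpa [bad, hM] using hb
  have hcover : {ω : (ι → P → ℝ) × (ι → ℝ) |
      ¬ NullSpaceProperty ω.1 fun i => SignType.sign (ω.2 i)}
      ⊆ Set.univ ×ˢ {z | (#{i | z i = 0} : ℝ) ≤ M}
        ∪ {ω | ω.1 ∈ bad fun i => SignType.sign (ω.2 i)} := by
    intro ω hω
    rcases le_or_gt (#{i | ω.2 i = 0} : ℝ) M with hM | hM
    · exact .inl ⟨Set.mem_univ _, hM⟩
    · exact .inr ⟨by simpa using hM, hω⟩
  calc _ ≤ ν {z | (#{i | z i = 0} : ℝ) ≤ M} + ENNReal.ofReal b := by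
        refine (measure_mono hcover).trans ((measure_union_le _ _).trans (add_le_add ?_ ?_))
        · rw [Measure.prod_prod, measure_univ, one_mul]
        · exact measure_prod_mem_comp_le measurableSet_sign_comp_preimage_singleton hbad
    _ ≤ ENNReal.ofReal a + ENNReal.ofReal b := by
        rw [← ofReal_measureReal (μ := ν)]
        gcongr
    _ = ENNReal.ofReal (a + b) := (ENNReal.ofReal_add (measureReal_nonneg.trans hfew) hb).symm

theorem exists_pos_forall_measure_not_nullSpaceProperty_sign_le {δ : ℝ} (hδ : 0 < δ) :
    ∃ c : ℝ, 0 < c ∧ ∀ (ι : Type u) (P : Type v) [Fintype ι] [Fintype P] (ν : ι → Measure ℝ)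
      [∀ i, IsProbabilityMeasure (ν i)] (η : ℝ), 0 ≤ η → (∀ i, η ≤ (ν i).real {0}) →
      Fintype.card P ≤ c * η ^ 2 * Fintype.card ι →
      ((gaussianMatrix ι P).prod (Measure.pi ν))
        {ω | ¬ NullSpaceProperty ω.1 fun i => SignType.sign (ω.2 i)} ≤ ENNReal.ofReal δ := by
  obtain ⟨c, hc, hnull⟩ :=
    exists_pos_forall_measureReal_not_nullSpaceProperty_le.{u, v} (t := δ / 4) (by positivity)
  refine ⟨min c (δ / 40), by positivity, fun ι P _ _ ν _ η hη hzero hP => ?_⟩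
  rcases isEmpty_or_nonempty P with hempty | hnonempty
  · have hvac : ∀ (G : ι → P → ℝ) σ, NullSpaceProperty G σ :=
      fun G σ v hv => (hv (Subsingleton.elim v 0)).elim
    simp [hvac]
  have hPc : Fintype.card P ≤ c * η ^ 2 * Fintype.card ι :=
    hP.trans (by gcongr; exact min_le_left _ _)
  have hPδ : Fintype.card P ≤ δ / 40 * η ^ 2 * Fintype.card ι :=
    hP.trans (by gcongr; exact min_le_right _ _)
  obtain ⟨i₀⟩ : Nonempty ι := by
    by_contra hι
    rw [not_nonempty_iff] at hι
    simp at hPc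
  have hfew : (Measure.pi ν).real {z | (#{i | z i = 0} : ℝ) ≤ η * Fintype.card ι / 2} ≤ δ / 4 :=
    calc _ ≤ exp (-(η * Fintype.card ι / 10)) := by
          simpa only [Set.mem_singleton_iff] using
            measureReal_pi_card_filter_mem_le_le (fun _ => measurableSet_singleton 0) hzero
      _ ≤ 10 * (δ / 40) := exp_neg_mul_div_ten_le hη ((hzero i₀).trans measureReal_le_one)
          (Nat.cast_nonneg _) (by positivity) (Nat.one_le_cast.2 Fintype.card_pos) hPδ
      _ = δ / 4 := by ring
  refine (measure_not_nullSpaceProperty_sign_le (by positivity) hfew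
    fun σ hσ => hnull ι P σ η hη hσ hPc).trans_eq ?_
  ring_nf

end RandomSigns

section PatchModel

variable {m n k : ℕ}

/-- The matrix `A_W` whose action on coefficient vectors is `AWapp`. -/
def designMatrix (m n k : ℕ) (x : Fin n → Fin (m * k) → ℝ) : Fin k → Fin m × Fin n → ℝ :=
  fun i p => patch m k p.1 (x p.2) i

instance isProbabilityMeasure_stdGaussianVec (d : ℕ) : IsProbabilityMeasure (stdGaussianVec d) := by
  unfold stdGaussianVec
  infer_instance

theorem AWapp_eq_designMatrix_dotProduct (x : Fin n → Fin (m * k) → ℝ)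
    (u : Fin m × Fin n → ℝ) (i : Fin k) : AWapp m n k x u i = designMatrix m n k x i ⬝ᵥ u := by
  simp only [AWapp, designMatrix, dotProduct, Fintype.sum_prod_type, mul_comm]

theorem measurePreserving_curry_pi {α β E : Type*} [Fintype α] [Fintype β] [MeasurableSpace E]
    (γ : Measure E) [IsProbabilityMeasure γ] :
    MeasurePreserving (MeasurableEquiv.curry α β E) (Measure.pi fun _ => γ)
      (Measure.pi fun _ => Measure.pi fun _ => γ) := by
  refine ⟨(MeasurableEquiv.curry α β E).measurable, ?_⟩
  simpa only [Measure.infinitePi_eq_pi] using Measure.infinitePi_map_curry fun (_ : α) (_ : β) => γ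

/-- The correspondence between the coordinates of the data and the entries of `A_W`: coordinate
`a * k + i` of the sample `s` is the entry in row `i` and column `(a, s)`. -/
def patchIndexEquiv (m n k : ℕ) : Fin n × Fin (m * k) ≃ Fin k × Fin m × Fin n where
  toFun q := ((finProdFinEquiv.symm q.2).2, (finProdFinEquiv.symm q.2).1, q.1)
  invFun r := (r.2.2, finProdFinEquiv (r.2.1, r.1))
  left_inv q := Prod.ext rfl (finProdFinEquiv.apply_symm_apply q.2)
  right_inv r := by simp

theorem designMatrix_eq_patchIndexEquiv_symm (x : Fin n → Fin (m * k) → ℝ) (i : Fin k)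
    (p : Fin m × Fin n) :
    designMatrix m n k x i p = Function.uncurry x ((patchIndexEquiv m n k).symm (i, p)) := by
  refine congrArg (x p.2) (Fin.ext ?_)
  simp [patchIndexEquiv, finProdFinEquiv]
  ring

theorem measurePreserving_designMatrix (m n k : ℕ) :
    MeasurePreserving (designMatrix m n k) (Measure.pi fun _ => stdGaussianVec (m * k))
      (gaussianMatrix (Fin k) (Fin m × Fin n)) := by
  have hflatten := (measurePreserving_curry_pi (α := Fin n) (β := Fin (m * k))
    (gaussianReal 0 1)).symm
  have hreindex := measurePreserving_arrowCongr' (fun _ => gaussianReal 0 1)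
    (fun _ => gaussianReal 0 1) (patchIndexEquiv m n k) (.refl ℝ) fun _ => .id _
  have hcurry := measurePreserving_curry_pi (α := Fin k) (β := Fin m × Fin n) (gaussianReal 0 1)
  convert hcurry.comp (hreindex.comp hflatten) using 1
  swap
  · rfl
  ext x i p
  rw [designMatrix_eq_patchIndexEquiv_symm]
  rfl

variable {ε : ℝ} {Q : Measure ℝ} [IsProbabilityMeasure Q]

theorem isProbabilityMeasure_mixture (hε : ε ∈ Set.Icc 0 1) :
    IsProbabilityMeasure (mixture ε Q) := by
  constructor
  simp only [mixture, Measure.add_apply, Measure.smul_apply, measure_univ, smul_eq_mul, mul_one]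
  rw [← ENNReal.ofReal_add (sub_nonneg.2 hε.2) hε.1]
  simp

theorem one_sub_le_measureReal_mixture_singleton_zero (hε : ε ∈ Set.Icc 0 1) :
    1 - ε ≤ (mixture ε Q).real {0} := by
  have := isProbabilityMeasure_mixture hε (Q := Q)
  rw [measureReal_def, ← ENNReal.ofReal_le_iff_le_toReal (measure_ne_top _ _)]
  simp [mixture]

end PatchModel

section ExactRecovery

variable {m n k : ℕ}

theorem eq_of_sum_abs_AWapp_le {x : Fin n → Fin (m * k) → ℝ} {z : Fin k → ℝ}
    (h : NullSpaceProperty (designMatrix m n k x) fun i => SignType.sign (z i))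
    {u v : Fin m × Fin n → ℝ}
    (hle : ∑ i, |AWapp m n k x u i + z i - AWapp m n k x v i|
      ≤ ∑ i, |AWapp m n k x u i + z i - AWapp m n k x u i|) : v = u := by
  refine h.eq_of_sum_abs_le (u := u) ?_
  simpa only [AWapp_eq_designMatrix_dotProduct, add_sub_cancel_left] using hle

theorem ofReal_one_sub_le_measure_of_measure_compl_le {Ω : Type*} [MeasurableSpace Ω]
    {μ : Measure Ω} [IsProbabilityMeasure μ] {s : Set Ω} {δ : ℝ} (hδ : 0 ≤ δ)
    (h : μ sᶜ ≤ ENNReal.ofReal δ) : ENNReal.ofReal (1 - δ) ≤ μ s := by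
  rw [ENNReal.ofReal_sub 1 hδ, ENNReal.ofReal_one, tsub_le_iff_right]
  calc 1 = μ Set.univ := measure_univ.symm
    _ ≤ μ s + μ sᶜ := measure_univ_le_add_compl s
    _ ≤ μ s + ENNReal.ofReal δ := by gcongr

theorem mul_le_of_sqrt_mul_log_div_le {ε c : ℝ} (hε : ε < 1) (hm : 0 < m) (hn : 0 < n)
    (hmn : m * n ≤ k)
    (h : √((m * n : ℝ) / k) * log (exp 1 * k / (m * n : ℝ)) / (1 - ε) ≤ √c) (hc : 0 ≤ c) :
    (m * n : ℝ) ≤ c * (1 - ε) ^ 2 * k := by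
  have hN : (0 : ℝ) < m * n := by positivity
  have hNk : (m * n : ℝ) ≤ k := mod_cast hmn
  have hk : (0 : ℝ) < k := hN.trans_le hNk
  have hlog : 1 ≤ log (exp 1 * k / (m * n : ℝ)) := by
    rw [le_log_iff_exp_le (by positivity), le_div_iff₀ hN]
    gcongr
  have hsqrt : √((m * n : ℝ) / k) ≤ √c * (1 - ε) :=
    (le_mul_of_one_le_right (sqrt_nonneg _) hlog).trans ((div_le_iff₀ (sub_pos.2 hε)).1 h)
  rw [← div_le_iff₀ hk]
  calc (m * n : ℝ) / k = √((m * n : ℝ) / k) ^ 2 := (sq_sqrt (by positivity)).symm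
    _ ≤ (√c * (1 - ε)) ^ 2 := by gcongr
    _ = c * (1 - ε) ^ 2 := by rw [mul_pow, sq_sqrt hc]

end ExactRecovery

theorem statement_5_general {δ : ℝ} (hδ : 0 < δ) :
    ∃ c : ℝ, 0 < c ∧ ∀ ε ∈ Set.Icc (0 : ℝ) 1, ∀ (m n k : ℕ) (Q : Fin k → Measure ℝ),
      (∀ i, IsProbabilityMeasure (Q i)) → (m * n : ℝ) ≤ c * (1 - ε) ^ 2 * k →
      ENNReal.ofReal (1 - δ) ≤
        ((Measure.pi fun _ : Fin n => stdGaussianVec (m * k)).prod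
            (Measure.pi fun i : Fin k => mixture ε (Q i)))
          {ω : (Fin n → Fin (m * k) → ℝ) × (Fin k → ℝ) |
            ∀ ustar utilde : Fin m × Fin n → ℝ,
              (∀ u : Fin m × Fin n → ℝ,
                (∑ i : Fin k, |AWapp m n k ω.1 ustar i + ω.2 i - AWapp m n k ω.1 utilde i|) ≤
                ∑ i : Fin k, |AWapp m n k ω.1 ustar i + ω.2 i - AWapp m n k ω.1 u i|) →
              utilde = ustar} := by
  obtain ⟨c, hc, hnull⟩ := exists_pos_forall_measure_not_nullSpaceProperty_sign_le hδ
  refine ⟨c, hc, fun ε hε m n k Q _ hmn => ?_⟩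
  have (i : Fin k) := isProbabilityMeasure_mixture hε (Q := Q i)
  have hbad := hnull (Fin k) (Fin m × Fin n) (fun i => mixture ε (Q i)) (1 - ε)
    (sub_nonneg.2 hε.2) (fun i => one_sub_le_measureReal_mixture_singleton_zero hε)
    (by simpa using hmn)
  have hdesign := (measurePreserving_designMatrix m n k).prod
    (MeasurePreserving.id (Measure.pi fun i : Fin k => mixture ε (Q i)))
  refine ofReal_one_sub_le_measure_of_measure_compl_le hδ.le ?_
  refine (measure_mono ?_).trans ((hdesign.measure_preimage_le _).trans hbad)
  exact fun ω hω hgood => hω fun ustar utilde hmin => eq_of_sum_abs_AWapp_le hgood (hmin ustar)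

theorem statement_5 (δ : ℝ) (hδ : δ ∈ Set.Ioo (0 : ℝ) 1) :
    ∃ c : ℝ, 0 < c ∧
      ∀ (ε : ℝ), 0 ≤ ε → ε < 1 →
      ∀ (m n k : ℕ), 0 < m → 0 < n → 0 < k → m * n ≤ k →
      ∀ (Q : Fin k → Measure ℝ), (∀ i, IsProbabilityMeasure (Q i)) →
      ∀ (ustar : (Fin n → Fin (m * k) → ℝ) → (Fin m × Fin n → ℝ)),
        Measurable ustar →
        Real.sqrt ((m * n : ℝ) / k) * Real.log (Real.exp 1 * k / (m * n : ℝ))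
            / (1 - ε) ≤ c →
        ENNReal.ofReal (1 - δ) ≤
          ((Measure.pi fun _ : Fin n => stdGaussianVec (m * k)).prod
              (Measure.pi fun i : Fin k => mixture ε (Q i)))
            {ω : (Fin n → Fin (m * k) → ℝ) × (Fin k → ℝ) |
              ∀ utilde : Fin m × Fin n → ℝ,
                (∀ u : Fin m × Fin n → ℝ,
                  (∑ i : Fin k,
                    |AWapp m n k ω.1 (ustar ω.1) i + ω.2 i - AWapp m n k ω.1 utilde i|) ≤
                  ∑ i : Fin k,
                    |AWapp m n k ω.1 (ustar ω.1) i + ω.2 i - AWapp m n k ω.1 u i|) →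
                ∀ i : Fin k, AWapp m n k ω.1 utilde i = AWapp m n k ω.1 (ustar ω.1) i} := by
  obtain ⟨c, hc, hrecover⟩ := statement_5_general hδ.1
  refine ⟨√c, sqrt_pos.2 hc, ?_⟩
  intro ε hε hε1 m n k hm hn _ hmn Q hQ ustar _ hle
  refine (hrecover ε ⟨hε, hε1.le⟩ m n k Q hQ
    (mul_le_of_sqrt_mul_log_div_le hε1 hm hn hmn hle hc.le)).trans (measure_mono ?_)
  exact fun ω hω utilde hmin i => by rw [hω (ustar ω.1) utilde hmin]

end
end

section
/- Fix δ ∈ (0,1) and ε ∈ [0,1). There exists a constant c(δ) > 0 depending only on δ such that: if ε·√(mn) ≤ c(δ), mn/√p ≤ c(δ), and n·log(mn)/k ≤ c(δ), then with probability at least 1 − δ (over the data, the weights, and the noise), every minimizer ṽ of v ↦ ‖η − A_β v‖₁ over ℝ^n satisfies A_β ṽ = β*. -/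
open MeasureTheory ProbabilityTheory Real
open scoped NNReal

noncomputable section

def relu (t : ℝ) : ℝ := max 0 t

/-- law of a Gaussian vector `N(0, k⁻¹ I_k)` on `ℝ^k`. -/
def hiddenWeightLaw (k : ℕ) : Measure (Fin k → ℝ) :=
  Measure.pi fun _ => gaussianReal 0 ((k : ℝ≥0))⁻¹

/-- entry `(j, s)` of the output-layer design matrix `A_β`. -/
def Abeta (m n p k : ℕ) (x : Fin n → Fin (m * k) → ℝ)
    (W : Fin p → Fin k → ℝ) (j : Fin p) (s : Fin n) : ℝ :=
  ∑ a : Fin m, relu (dot (W j) (patch m k a (x s)))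

/-- `A_β v` for `v ∈ ℝ^n`. -/
def AbetaApp (m n p k : ℕ) (x : Fin n → Fin (m * k) → ℝ)
    (W : Fin p → Fin k → ℝ) (v : Fin n → ℝ) (j : Fin p) : ℝ :=
  ∑ s : Fin n, Abeta m n p k x W j s * v s

/-
Recovery is deterministic once `‖A_β u‖₁ ≥ L ‖u‖` for all `u` while the rows of `A_β` selected by
the support of `z` have total norm less than `L / 2`: for `u = ṽ - v*`, minimality of `ṽ` bounds
`‖A_β u‖₁` by twice its part on that support, which forces `u = 0`.

For the lower bound, fix a unit vector `v`. As a function of the weights `w` of one hidden unit,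
`A_β v` has odd part `⟪w, y⟫ / 2` with `y = ∑ₛ vₛ ∑ₐ Pₐ xₛ ~ N(0, m I_k)`. A symmetrization in
`w ↦ -w` bounds the Laplace transform of `|A_β v|` in terms of that of its odd part, which is
Gaussian given the data, so `‖A_β v‖₁ ≳ p √m t` fails with probability at most
`(3 t)ᵏ + exp (-p / 8)`. A union bound over a net of the unit sphere and a perturbation argument
give all `u` simultaneously; one unit has expected row norm at most `m √n`, hence the net needs
radius of order `1 / √(mn)`. Markov's inequality for the row norms controls both the perturbation
and the rows on the support of `z`.
-/

section Net

open Metric Module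

variable {E : Type*} [NormedAddCommGroup E] [NormedSpace ℝ E]

theorem exists_finset_eq_sphere_of_finrank_eq_one (h : finrank ℝ E = 1) :
    ∃ N : Finset E, (N : Set E) = sphere 0 1 ∧ N.card ≤ 2 := by
  classical
  have : Nontrivial E := nontrivial_of_finrank_pos (R := ℝ) (by lia)
  obtain ⟨u, hu⟩ := exists_norm_eq E zero_le_one
  refine ⟨{u, -u}, Set.ext fun v ↦ ⟨?_, fun hv ↦ ?_⟩, Finset.card_le_two⟩
  · aesop
  · obtain ⟨c, rfl⟩ := exists_smul_eq_of_finrank_eq_one h (norm_pos_iff.1 (hu ▸ one_pos)) v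
    have hc : |c| = 1 := by simpa [norm_smul, hu] using hv
    rcases (abs_eq zero_le_one).1 hc with rfl | rfl <;> simp

variable [FiniteDimensional ℝ E]

theorem measureReal_addHaar_ball_of_pos [MeasurableSpace E] [BorelSpace E] (μ : Measure E)
    [μ.IsAddHaarMeasure] (x : E) {r : ℝ} (hr : 0 < r) :
    μ.real (ball x r) = r ^ finrank ℝ E * μ.real (ball 0 1) := by
  rw [measureReal_def, μ.addHaar_ball_of_pos x hr, ENNReal.toReal_mul,
    ENNReal.toReal_ofReal (by positivity), measureReal_def]

/- Volume comparison: the balls of radius `η / 2` about the points of `s` are disjoint and lie in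
the ball of radius `1 + η / 2` about the origin. -/
theorem card_le_of_isSeparated_of_subset_closedBall {η : ℝ≥0} (hη : 0 < η) {s : Finset E}
    (hs : (s : Set E) ⊆ closedBall 0 1) (hsep : IsSeparated η (s : Set E)) :
    (s.card : ℝ) ≤ (1 + 2 / η) ^ finrank ℝ E := by
  borelize E
  let μ : Measure E := Measure.addHaar
  have hη' : (0 : ℝ) < η := by exact_mod_cast hη
  have hdisj : (s : Set E).PairwiseDisjoint fun c ↦ ball c (η / 2 : ℝ) := fun c hc d hd hcd ↦ by
    have hlt : (η : ENNReal) < edist c d := hsep hc hd hcd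
    rw [edist_nndist, ENNReal.coe_lt_coe, ← NNReal.coe_lt_coe, coe_nndist] at hlt
    exact ball_disjoint_ball (by linarith)
  have hsub : ⋃ c ∈ s, ball c (η / 2 : ℝ) ⊆ ball (0 : E) (1 + η / 2) :=
    Set.iUnion₂_subset fun c hc ↦ ball_subset_ball' (by linarith [mem_closedBall.1 (hs hc)])
  have hvol : s.card * ((η / 2 : ℝ) ^ finrank ℝ E * μ.real (ball 0 1))
      ≤ (1 + η / 2 : ℝ) ^ finrank ℝ E * μ.real (ball 0 1) := by
    calc s.card * ((η / 2 : ℝ) ^ finrank ℝ E * μ.real (ball 0 1))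
        = μ.real (⋃ c ∈ s, ball c (η / 2 : ℝ)) := by
          rw [measureReal_biUnion_finset hdisj fun _ _ ↦ measurableSet_ball]
          simp [measureReal_addHaar_ball_of_pos μ _ (half_pos hη')]
      _ ≤ μ.real (ball (0 : E) (1 + η / 2)) :=
          measureReal_mono hsub measure_ball_lt_top.ne
      _ = (1 + η / 2 : ℝ) ^ finrank ℝ E * μ.real (ball 0 1) :=
          measureReal_addHaar_ball_of_pos μ _ (by positivity)
  have hball : 0 < μ.real (ball (0 : E) 1) :=
    ENNReal.toReal_pos (measure_ball_pos μ _ one_pos).ne' measure_ball_lt_top.ne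
  have hcard : s.card * (η / 2 : ℝ) ^ finrank ℝ E ≤ (1 + η / 2 : ℝ) ^ finrank ℝ E :=
    le_of_mul_le_mul_right (by linarith) hball
  calc (s.card : ℝ) ≤ (1 + η / 2 : ℝ) ^ finrank ℝ E / (η / 2 : ℝ) ^ finrank ℝ E :=
        (le_div_iff₀ (by positivity)).2 hcard
    _ = (1 + 2 / η) ^ finrank ℝ E := by
        rw [← div_pow]
        congr 1
        field_simp
        ring

theorem exists_finset_isCover_sphere {η : ℝ≥0} (hη : 0 < η) (hη1 : η ≤ 1) :
    ∃ N : Finset E, (N : Set E) ⊆ sphere 0 1 ∧ IsCover η (sphere 0 1) (N : Set E) ∧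
      (N.card : ℝ) ≤ (3 / η) ^ finrank ℝ E := by
  have hη' : (0 : ℝ) < η := by exact_mod_cast hη
  have hpack : packingNumber η (sphere (0 : E) 1) ≠ ⊤ := by
    obtain ⟨C, -, hCfin, hC⟩ :=
      exists_finite_isCover_of_isCompact (half_pos hη).ne' (isCompact_sphere (0 : E) 1)
    have hle := packingNumber_two_mul_le_externalCoveringNumber (η / 2) (sphere (0 : E) 1)
    rw [mul_div_cancel₀ η two_ne_zero] at hle
    exact ((hle.trans hC.externalCoveringNumber_le_encard).trans_lt hCfin.encard_lt_top).ne
  have hfin : (maximalSeparatedSet η (sphere (0 : E) 1)).Finite := by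
    rw [← Set.encard_ne_top_iff, encard_maximalSeparatedSet hpack]
    exact hpack
  refine ⟨hfin.toFinset, ?_, ?_, ?_⟩
  · simpa using maximalSeparatedSet_subset
  · simpa using isCover_maximalSeparatedSet hpack
  · refine (card_le_of_isSeparated_of_subset_closedBall hη ?_ ?_).trans ?_
    · simpa using maximalSeparatedSet_subset.trans sphere_subset_closedBall
    · simpa using isSeparated_maximalSeparatedSet
    · gcongr
      rw [le_div_iff₀ hη', add_mul, div_mul_cancel₀ _ hη'.ne']
      linarith [NNReal.coe_le_coe.2 hη1, NNReal.coe_one]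

end Net

section Recovery

open Metric

variable {E ι : Type*} [NormedAddCommGroup E] [NormedSpace ℝ E] [Fintype ι]

theorem mul_norm_le_sum_abs_of_isCover_sphere {a : ι → E →L[ℝ] ℝ} {N : Set E} {η : ℝ≥0} {L : ℝ}
    (hcover : IsCover η (sphere 0 1) N) (hN : ∀ v ∈ N, 2 * L ≤ ∑ j, |a j v|)
    (ha : (∑ j, ‖a j‖) * η ≤ L) (u : E) : L * ‖u‖ ≤ ∑ j, |a j u| := by
  have hsphere : ∀ w ∈ sphere (0 : E) 1, L ≤ ∑ j, |a j w| := fun w hw ↦ by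
    obtain ⟨v, hv, hwv⟩ := Set.mem_iUnion₂.1 (isCover_iff_subset_iUnion_closedBall.1 hcover hw)
    have hclose : ∑ j, |a j (v - w)| ≤ L := by
      refine le_trans ?_ ha
      rw [Finset.sum_mul]
      gcongr with j
      exact (a j).le_opNorm_of_le (by rwa [← dist_eq_norm, dist_comm])
    have htri : ∑ j, |a j v| ≤ ∑ j, |a j (v - w)| + ∑ j, |a j w| := by
      rw [← Finset.sum_add_distrib]
      gcongr with j
      simpa using abs_add_le (a j (v - w)) (a j w)
    linarith [hN v hv]
  rcases eq_or_ne u 0 with rfl | hu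
  · simp
  · have h := hsphere (‖u‖⁻¹ • u) (by simp [norm_smul, hu])
    simp only [map_smul, smul_eq_mul, abs_mul, abs_inv, abs_norm, ← Finset.mul_sum] at h
    rwa [inv_mul_eq_div, le_div_iff₀ (norm_pos_iff.2 hu)] at h

theorem eq_of_sum_abs_add_sub_le {a : ι → E →L[ℝ] ℝ} {L : ℝ} {z : ι → ℝ} {v₀ v : E}
    (hlower : ∀ u, L * ‖u‖ ≤ ∑ j, |a j u|) (hz : 2 * ∑ j with z j ≠ 0, ‖a j‖ < L)
    (hv : ∑ j, |a j v₀ + z j - a j v| ≤ ∑ j, |a j v₀ + z j - a j v₀|) : v = v₀ := by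
  have hpt : ∀ j, |a j (v - v₀)| + |z j| ≤
      |a j v₀ + z j - a j v| + if z j ≠ 0 then 2 * (‖a j‖ * ‖v - v₀‖) else 0 := fun j ↦ by
    have hle : |a j (v - v₀)| ≤ ‖a j‖ * ‖v - v₀‖ := (a j).le_opNorm _
    have heq : a j v₀ + z j - a j v = z j - a j (v - v₀) := by rw [map_sub]; ring
    rw [heq]
    split_ifs with h
    · linarith [abs_sub_abs_le_abs_sub (z j) (a j (v - v₀))]
    · simp [not_not.1 h, abs_sub_comm]
  have hsum := Finset.sum_le_sum fun j (_ : j ∈ Finset.univ) ↦ hpt j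
  simp only [Finset.sum_add_distrib, ← Finset.sum_filter, ← Finset.mul_sum, ← Finset.sum_mul]
    at hsum
  simp only [add_sub_cancel_left] at hv
  have hle : L * ‖v - v₀‖ ≤ (2 * ∑ j with z j ≠ 0, ‖a j‖) * ‖v - v₀‖ := by
    linarith [hlower (v - v₀)]
  by_contra hne
  exact hle.not_gt (mul_lt_mul_of_pos_right hz (norm_pos_iff.2 (sub_ne_zero.2 hne)))

end Recovery

section GaussianLaws

variable {ι : Type*} [Fintype ι]

theorem map_sum_pi_eq_gaussianReal {Ω : ι → Type*} [∀ i, MeasurableSpace (Ω i)]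
    {μ : ∀ i, Measure (Ω i)} [∀ i, IsProbabilityMeasure (μ i)] {f : ∀ i, Ω i → ℝ} {σ : ι → ℝ≥0}
    (hf : ∀ i, Measurable (f i)) (hlaw : ∀ i, (μ i).map (f i) = gaussianReal 0 (σ i)) :
    (Measure.pi μ).map (fun x ↦ ∑ i, f i (x i)) = gaussianReal 0 (∑ i, σ i) := by
  have hcomp : (Measure.pi μ).map (fun x ↦ ∑ i, f i (x i))
      = (Measure.pi fun i ↦ gaussianReal 0 (σ i)).map (fun y ↦ ∑ i, y i) := by
    have : ∀ i, IsProbabilityMeasure ((μ i).map (f i)) := fun i ↦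
      Measure.isProbabilityMeasure_map (hf i).aemeasurable
    simp_rw [← hlaw]
    rw [← Measure.pi_map_pi fun i ↦ (hf i).aemeasurable,
      Measure.map_map (by fun_prop) (by fun_prop)]
    rfl
  have : IsProbabilityMeasure ((Measure.pi μ).map (fun x ↦ ∑ i, f i (x i))) :=
    Measure.isProbabilityMeasure_map
      (Finset.measurable_sum _ fun i _ ↦ (hf i).comp (measurable_pi_apply i)).aemeasurable
  refine Measure.ext_of_charFun (funext fun t ↦ ?_)
  rw [hcomp, charFun_map_sum_pi_eq_prod, Finset.prod_apply]
  simp [charFun_gaussianReal, ← Complex.exp_sum, Finset.sum_mul, Finset.sum_div]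

theorem map_sum_mul_pi_gaussianReal (σ : ℝ≥0) (b : ι → ℝ) :
    (Measure.pi fun _ ↦ gaussianReal 0 σ).map (fun w : ι → ℝ ↦ ∑ i, b i * w i)
      = gaussianReal 0 (σ * (∑ i, b i ^ 2).toNNReal) := by
  rw [map_sum_pi_eq_gaussianReal (f := fun i y ↦ b i * y) (fun i ↦ by fun_prop)
    fun i ↦ by rw [gaussianReal_map_const_mul, mul_zero], ← Finset.sum_mul, mul_comm]
  congr 2
  exact NNReal.eq (by simp [Finset.sum_nonneg, sq_nonneg])

/- Cramér–Wold: the characteristic function of `μ` at `L` is that of `μ.map L` at `1`. -/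
theorem ext_of_map_sum_mul {μ ν : Measure (ι → ℝ)} [IsFiniteMeasure μ] [IsFiniteMeasure ν]
    (h : ∀ b : ι → ℝ, μ.map (fun y ↦ ∑ i, b i * y i) = ν.map fun y ↦ ∑ i, b i * y i) :
    μ = ν := by
  classical
  refine Measure.ext_of_charFunDual (funext fun L ↦ ?_)
  have hL : ⇑L = fun y ↦ ∑ i, L (Pi.single i 1) * y i := funext fun y ↦ by
    conv_lhs => rw [pi_eq_sum_univ' y]
    simp [map_sum, map_smul, mul_comm]
  rw [charFunDual_eq_charFun_map_one, charFunDual_eq_charFun_map_one, hL, h]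

theorem lintegral_sq_gaussianReal (σ : ℝ≥0) :
    ∫⁻ t, ENNReal.ofReal (t ^ 2) ∂gaussianReal 0 σ = σ := by
  have hint : Integrable (fun t : ℝ ↦ t ^ 2) (gaussianReal 0 σ) :=
    (memLp_id_gaussianReal 2).integrable_sq
  have hvar : ∫ t, t ^ 2 ∂gaussianReal 0 σ = σ := by
    have h := variance_fun_id_gaussianReal (μ := 0) (v := σ)
    rwa [variance_of_integral_eq_zero (by fun_prop) (by simp)] at h
  rw [← ofReal_integral_eq_lintegral_ofReal hint (.of_forall fun t ↦ sq_nonneg t), hvar,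
    ENNReal.ofReal_coe_nnreal]

theorem integral_exp_neg_mul_abs {l : ℝ} (hl : 0 < l) : ∫ t, exp (-l * |t|) = 2 / l := by
  rw [integral_comp_abs (f := fun t ↦ exp (-l * t)), integral_exp_mul_Ioi (by linarith)]
  simp
  ring

theorem mgf_abs_gaussianReal_le {σ : ℝ≥0} (hσ : σ ≠ 0) {l : ℝ} (hl : 0 < l) :
    mgf (|·|) (gaussianReal 0 σ) (-l) ≤ 1 / (l * √σ) := by
  have hσ' : (0 : ℝ) < σ := NNReal.coe_pos.2 (pos_iff_ne_zero.2 hσ)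
  have hexp : Integrable fun t : ℝ ↦ exp (-l * |t|) := by
    refine Integrable.of_integral_ne_zero ?_
    rw [integral_exp_neg_mul_abs hl]
    positivity
  have hpdf : ∀ t, gaussianPDFReal 0 σ t ≤ (√(2 * π * σ))⁻¹ := fun t ↦ by
    rw [gaussianPDFReal]
    refine mul_le_of_le_one_right (by positivity) (exp_le_one_iff.2 ?_)
    rw [neg_div]
    exact neg_nonpos.2 (by positivity)
  have hsqrt : 2 * √σ ≤ √(2 * π * σ) := by
    rw [show (2 : ℝ) * √σ = √(2 ^ 2 * σ) by simp]
    exact sqrt_le_sqrt (by nlinarith [pi_gt_three])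
  calc mgf (|·|) (gaussianReal 0 σ) (-l)
      = ∫ t, gaussianPDFReal 0 σ t * exp (-l * |t|) := by
        rw [mgf, integral_gaussianReal_eq_integral_smul hσ]
        rfl
    _ ≤ ∫ t, (√(2 * π * σ))⁻¹ * exp (-l * |t|) := by
        refine integral_mono_of_nonneg (.of_forall fun t ↦ ?_) (hexp.const_mul _)
          (.of_forall fun t ↦ ?_)
        · exact mul_nonneg (gaussianPDFReal_nonneg ..) (exp_pos _).le
        · exact mul_le_mul_of_nonneg_right (hpdf t) (exp_pos _).le
    _ = (√(2 * π * σ))⁻¹ * (2 / l) := by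
        rw [integral_const_mul, integral_exp_neg_mul_abs hl]
    _ ≤ (2 * √σ)⁻¹ * (2 / l) := by gcongr
    _ = 1 / (l * √σ) := by field_simp

end GaussianLaws

section LowerTail

theorem mgf_sum_pi {ι Ω : Type*} [Fintype ι] [MeasurableSpace Ω] (μ : Measure Ω) [SigmaFinite μ]
    (f : Ω → ℝ) (t : ℝ) :
    mgf (fun w ↦ ∑ i, f (w i)) (Measure.pi fun _ : ι ↦ μ) t = mgf f μ t ^ Fintype.card ι := by
  simp only [mgf, Finset.mul_sum, exp_sum]
  exact integral_fintype_prod_eq_pow fun y ↦ exp (t * f y)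

variable {Ω : Type*} [MeasurableSpace Ω] {μ : Measure Ω} [IsProbabilityMeasure μ] {f : Ω → ℝ}

theorem integrable_exp_neg_mul (hf : Measurable f) (hf0 : 0 ≤ f) {l : ℝ} (hl : 0 ≤ l) :
    Integrable (fun y ↦ exp (-l * f y)) μ :=
  Integrable.of_bound (C := 1) (by fun_prop) <| .of_forall fun y ↦ by
    rw [norm_eq_abs, abs_exp, exp_le_one_iff]
    nlinarith [hf0 y, mul_nonneg hl (hf0 y)]

theorem measureReal_sum_pi_le_le_pow {ι : Type*} [Fintype ι] (hf : Measurable f) (hf0 : 0 ≤ f)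
    {l : ℝ} (hl : 0 ≤ l) (a : ℝ) :
    (Measure.pi fun _ : ι ↦ μ).real {w | ∑ i, f (w i) ≤ Fintype.card ι * a}
      ≤ (exp (l * a) * mgf f μ (-l)) ^ Fintype.card ι := by
  have hint : Integrable (fun w : ι → Ω ↦ exp (-l * ∑ i, f (w i))) (Measure.pi fun _ ↦ μ) :=
    integrable_exp_neg_mul (by fun_prop) (fun w ↦ Finset.sum_nonneg fun i _ ↦ hf0 (w i)) hl
  refine (measure_le_le_exp_mul_mgf _ (neg_nonpos.2 hl) hint).trans_eq ?_
  rw [mgf_sum_pi, mul_pow, ← exp_nat_mul]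
  congr 2
  ring

/- With `x = exp (-l |f y|)` and `y = exp (-l |f (τ y)|)` in `[0, 1]`, the pointwise inequality is
`0 ≤ (1 - x) (1 - y)` together with the triangle inequality. -/
theorem two_mul_mgf_abs_neg_le_one_add_mgf_abs_sub_comp (hf : Measurable f) {τ : Ω → Ω}
    (hτ : MeasurePreserving τ μ μ) {l : ℝ} (hl : 0 ≤ l) :
    2 * mgf (fun y ↦ |f y|) μ (-l) ≤ 1 + mgf (fun y ↦ |f y - f (τ y)|) μ (-l) := by
  have hτm : Measurable τ := hτ.measurable
  have hint : Integrable (fun y ↦ exp (-l * |f y|)) μ :=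
    integrable_exp_neg_mul (by fun_prop) (fun y ↦ abs_nonneg _) hl
  have hint_comp : Integrable (fun y ↦ exp (-l * |f (τ y)|)) μ :=
    integrable_exp_neg_mul (by fun_prop) (fun y ↦ abs_nonneg _) hl
  have hint_sub : Integrable (fun y ↦ exp (-l * |f y - f (τ y)|)) μ :=
    integrable_exp_neg_mul (by fun_prop) (fun y ↦ abs_nonneg _) hl
  have hmgf_comp : mgf (fun y ↦ |f y|) μ (-l) = ∫ y, exp (-l * |f (τ y)|) ∂μ := by
    conv_lhs => rw [mgf, ← hτ.map_eq]
    exact integral_map hτ.aemeasurable (by fun_prop)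
  have hpt : ∀ y, exp (-l * |f y|) + exp (-l * |f (τ y)|) ≤ 1 + exp (-l * |f y - f (τ y)|) :=
    fun y ↦ by
      have hle_one : ∀ t : ℝ, exp (-l * |t|) ≤ 1 := fun t ↦
        exp_le_one_iff.2 (mul_nonpos_of_nonpos_of_nonneg (by linarith) (abs_nonneg t))
      have hmul : exp (-l * |f y|) * exp (-l * |f (τ y)|) ≤ exp (-l * |f y - f (τ y)|) := by
        rw [← exp_add, exp_le_exp]
        nlinarith [abs_sub (f y) (f (τ y))]
      nlinarith [mul_nonneg (sub_nonneg.2 (hle_one (f y))) (sub_nonneg.2 (hle_one (f (τ y))))]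
  calc 2 * mgf (fun y ↦ |f y|) μ (-l)
      = ∫ y, (exp (-l * |f y|) + exp (-l * |f (τ y)|)) ∂μ := by
        rw [integral_add hint hint_comp, ← hmgf_comp, two_mul, mgf]
    _ ≤ ∫ y, (1 + exp (-l * |f y - f (τ y)|)) ∂μ :=
        integral_mono (hint.add hint_comp) ((integrable_const 1).add hint_sub) hpt
    _ = 1 + mgf (fun y ↦ |f y - f (τ y)|) μ (-l) := by
        rw [integral_add (integrable_const 1) hint_sub]
        simp [mgf]

theorem measureReal_sum_abs_pi_gaussianReal_le_le {ι : Type*} [Fintype ι] {σ : ℝ≥0} (hσ : σ ≠ 0)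
    {a : ℝ} (ha : 0 < a) :
    (Measure.pi fun _ : ι ↦ gaussianReal 0 σ).real {y | ∑ i, |y i| ≤ Fintype.card ι * a}
      ≤ (3 * a / √σ) ^ Fintype.card ι := by
  refine (measureReal_sum_pi_le_le_pow measurable_abs abs_nonneg (one_div_pos.2 ha).le a).trans ?_
  refine pow_le_pow_left₀ (mul_nonneg (exp_pos _).le mgf_nonneg) ?_ _
  calc exp (1 / a * a) * mgf (|·|) (gaussianReal 0 σ) (-(1 / a))
      ≤ 3 * (1 / (1 / a * √σ)) := by
        rw [one_div_mul_cancel ha.ne']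
        exact mul_le_mul exp_one_lt_three.le (mgf_abs_gaussianReal_le hσ (one_div_pos.2 ha))
          mgf_nonneg (by norm_num)
    _ = 3 * a / √σ := by field_simp

end LowerTail

section FilterRow

variable {m n k : ℕ}

theorem patch_eq_finProdFinEquiv (a : Fin m) (y : Fin (m * k) → ℝ) (i : Fin k) :
    patch m k a y i = y (finProdFinEquiv (a, i)) := by
  simp only [patch, finProdFinEquiv, Equiv.coe_fn_mk]
  congr 2
  ring

theorem sum_mul_sum_patch (b : Fin k → ℝ) (y : Fin (m * k) → ℝ) :
    ∑ i, b i * ∑ a, patch m k a y i = ∑ c : Fin (m * k), b (finProdFinEquiv.symm c).2 * y c := by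
  rw [← finProdFinEquiv.sum_comp, Fintype.sum_prod_type_right]
  simp_rw [Finset.mul_sum, patch_eq_finProdFinEquiv, Equiv.symm_apply_apply]

theorem sum_sum_patch_sq (y : Fin (m * k) → ℝ) :
    ∑ a, ∑ i, patch m k a y i ^ 2 = ∑ c, y c ^ 2 := by
  rw [← finProdFinEquiv.sum_comp, Fintype.sum_prod_type]
  simp_rw [patch_eq_finProdFinEquiv]

theorem relu_sub_relu_neg (t : ℝ) : relu t - relu (-t) = t := by
  simp only [relu, max_comm (0 : ℝ), max_zero_sub_max_neg_zero_eq_self]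

theorem relu_sq_le_sq (t : ℝ) : relu t ^ 2 ≤ t ^ 2 := by
  rw [sq_le_sq, relu, abs_of_nonneg (le_max_left 0 t)]
  exact max_le (abs_nonneg t) (le_abs_self t)

theorem dot_neg_left (w y : Fin k → ℝ) : dot (-w) y = -dot w y := by
  simp [dot]

@[fun_prop]
theorem measurable_relu : Measurable relu :=
  measurable_const.max measurable_id

/-- The vector `y = ∑ₛ vₛ ∑ₐ Pₐ xₛ ∈ ℝᵏ`: in the weights `w` of a hidden unit, the odd part of the
entry of `A_β v` at this unit is `⟪w, y⟫ / 2`. -/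
def patchSum (v : EuclideanSpace ℝ (Fin n)) (x : Fin n → Fin (m * k) → ℝ) (i : Fin k) : ℝ :=
  ∑ s, v s * ∑ a, patch m k a (x s) i

/-- The row of `A_β` belonging to a hidden unit with weights `w`, as the linear functional
`v ↦ ∑ₛ (∑ₐ ψ(wᵀ Pₐ xₛ)) vₛ` on Euclidean `ℝⁿ`. -/
def filterRow (x : Fin n → Fin (m * k) → ℝ) (w : Fin k → ℝ) : EuclideanSpace ℝ (Fin n) →L[ℝ] ℝ :=
  innerSL ℝ (WithLp.toLp 2 fun s ↦ ∑ a, relu (dot w (patch m k a (x s))))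

theorem filterRow_apply (x : Fin n → Fin (m * k) → ℝ) (w : Fin k → ℝ)
    (v : EuclideanSpace ℝ (Fin n)) :
    filterRow x w v = ∑ s, (∑ a, relu (dot w (patch m k a (x s)))) * v s := by
  simp [filterRow, PiLp.inner_apply, mul_comm]

theorem norm_filterRow_sq (x : Fin n → Fin (m * k) → ℝ) (w : Fin k → ℝ) :
    ‖filterRow x w‖ ^ 2 = ∑ s, (∑ a, relu (dot w (patch m k a (x s)))) ^ 2 := by
  rw [filterRow, innerSL_apply_norm, EuclideanSpace.real_norm_sq_eq]

theorem AbetaApp_eq_filterRow {p : ℕ} (x : Fin n → Fin (m * k) → ℝ) (W : Fin p → Fin k → ℝ)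
    (v : Fin n → ℝ) (j : Fin p) :
    AbetaApp m n p k x W v j = filterRow x (W j) (WithLp.toLp 2 v) :=
  (filterRow_apply x (W j) (WithLp.toLp 2 v)).symm

@[fun_prop]
theorem measurable_patchSum (v : EuclideanSpace ℝ (Fin n)) :
    Measurable (patchSum (m := m) (k := k) v) := by
  unfold patchSum patch
  fun_prop

@[fun_prop]
theorem measurable_filterRow {Ω : Type*} [MeasurableSpace Ω] {x : Ω → Fin n → Fin (m * k) → ℝ}
    {w : Ω → Fin k → ℝ} (hx : Measurable x) (hw : Measurable w) :
    Measurable fun ω ↦ filterRow (x ω) (w ω) := by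
  refine ((innerSL ℝ).continuous.measurable.comp (WithLp.measurable_toLp 2 _)).comp ?_
  simp only [dot, patch]
  fun_prop

theorem filterRow_sub_filterRow_neg (x : Fin n → Fin (m * k) → ℝ) (w : Fin k → ℝ)
    (v : EuclideanSpace ℝ (Fin n)) :
    filterRow x w v - filterRow x (-w) v = ∑ i, patchSum v x i * w i := by
  calc filterRow x w v - filterRow x (-w) v
      = ∑ s, (∑ a, dot w (patch m k a (x s))) * v s := by
        simp_rw [filterRow_apply, dot_neg_left, ← Finset.sum_sub_distrib, ← sub_mul,
          ← Finset.sum_sub_distrib, relu_sub_relu_neg]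
    _ = ∑ s, ∑ i, v s * (∑ a, patch m k a (x s) i) * w i := by
        refine Finset.sum_congr rfl fun s _ ↦ ?_
        simp only [dot]
        rw [Finset.sum_comm, Finset.sum_mul]
        refine Finset.sum_congr rfl fun i _ ↦ ?_
        rw [← Finset.mul_sum]
        ring
    _ = ∑ i, patchSum v x i * w i := by
        rw [Finset.sum_comm]
        simp_rw [patchSum, Finset.sum_mul]

end FilterRow

section Laws

variable {m n k : ℕ}

instance (d : ℕ) : IsProbabilityMeasure (stdGaussianVec d) :=
  inferInstanceAs (IsProbabilityMeasure (Measure.pi _))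

instance (k : ℕ) : IsProbabilityMeasure (hiddenWeightLaw k) :=
  inferInstanceAs (IsProbabilityMeasure (Measure.pi _))

theorem measurePreserving_neg_hiddenWeightLaw (k : ℕ) :
    MeasurePreserving (fun w ↦ -w) (hiddenWeightLaw k) (hiddenWeightLaw k) :=
  measurePreserving_pi _ _ fun _ ↦ ⟨measurable_neg, gaussianReal_map_neg.trans (by rw [neg_zero])⟩

theorem map_patchSum (v : EuclideanSpace ℝ (Fin n)) :
    (Measure.pi fun _ ↦ stdGaussianVec (m * k)).map (patchSum v)
      = Measure.pi fun _ : Fin k ↦ gaussianReal 0 (m * ‖v‖₊ ^ 2) := by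
  have : IsProbabilityMeasure ((Measure.pi fun _ ↦ stdGaussianVec (m * k)).map (patchSum v)) :=
    Measure.isProbabilityMeasure_map (by fun_prop)
  refine ext_of_map_sum_mul fun b ↦ ?_
  have hlin : (fun x : Fin n → Fin (m * k) → ℝ ↦ ∑ i, b i * patchSum v x i)
      = fun x ↦ ∑ s, ∑ c, v s * b (finProdFinEquiv.symm c).2 * x s c := funext fun x ↦ by
    simp_rw [mul_assoc, ← Finset.mul_sum, ← sum_mul_sum_patch, patchSum, Finset.mul_sum]
    rw [Finset.sum_comm]
    simp_rw [mul_left_comm]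
  have hvar : ∑ s, ∑ c : Fin (m * k), (v s * b (finProdFinEquiv.symm c).2) ^ 2
      = m * ‖v‖ ^ 2 * ∑ i, b i ^ 2 := by
    have hrep : ∑ c : Fin (m * k), b (finProdFinEquiv.symm c).2 ^ 2 = m * ∑ i, b i ^ 2 := by
      simp only [← finProdFinEquiv.sum_comp, Fintype.sum_prod_type, Equiv.symm_apply_apply,
        Finset.sum_const, Finset.card_univ, Fintype.card_fin, nsmul_eq_mul]
    simp_rw [mul_pow, ← Finset.mul_sum, ← Finset.sum_mul, hrep, EuclideanSpace.real_norm_sq_eq]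
    ring
  rw [Measure.map_map (by fun_prop) (by fun_prop), map_sum_mul_pi_gaussianReal, Function.comp_def,
    hlin]
  refine (map_sum_pi_eq_gaussianReal (μ := fun _ ↦ stdGaussianVec (m * k))
    (f := fun s y ↦ ∑ c, v s * b (finProdFinEquiv.symm c).2 * y c) (fun s ↦ by fun_prop)
    fun s ↦ map_sum_mul_pi_gaussianReal 1 _).trans ?_
  congr 1
  refine NNReal.eq ?_
  simpa [Finset.sum_nonneg, sq_nonneg] using hvar

theorem measureReal_sum_patchSum_sq_le_le (hm : 0 < m) {v : EuclideanSpace ℝ (Fin n)}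
    (hv : v ≠ 0) {r : ℝ} (hr : 0 < r) :
    (Measure.pi fun _ ↦ stdGaussianVec (m * k)).real {x | ∑ i, patchSum v x i ^ 2 ≤ k * r ^ 2}
      ≤ (3 * r / (√m * ‖v‖)) ^ k := by
  have hσ : (m * ‖v‖₊ ^ 2 : ℝ≥0) ≠ 0 := by simp [hm.ne', hv]
  have hsub : {x : Fin n → Fin (m * k) → ℝ | ∑ i, patchSum v x i ^ 2 ≤ k * r ^ 2}
      ⊆ patchSum v ⁻¹' {y | ∑ i, |y i| ≤ Fintype.card (Fin k) * r} := fun x hx ↦ by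
    have hcs := sq_sum_le_card_mul_sum_sq (s := Finset.univ) (f := fun i ↦ |patchSum v x i|)
    simp only [sq_abs, Finset.card_univ, Fintype.card_fin] at hcs
    rw [Set.mem_preimage, Set.mem_ofPred_eq, Fintype.card_fin]
    refine abs_le_of_sq_le_sq' ?_ (by positivity) |>.2
    calc (∑ i, |patchSum v x i|) ^ 2 ≤ k * ∑ i, patchSum v x i ^ 2 := hcs
      _ ≤ k * (k * r ^ 2) := by gcongr; exact hx
      _ = (k * r) ^ 2 := by ring
  refine (measureReal_mono hsub).trans ?_
  rw [← map_measureReal_apply (by fun_prop) (measurableSet_le (by fun_prop) (by fun_prop)),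
    map_patchSum]
  refine (measureReal_sum_abs_pi_gaussianReal_le_le hσ hr).trans_eq ?_
  simp

theorem mgf_abs_sum_mul_hiddenWeightLaw_le {y : Fin k → ℝ} {r : ℝ} (hr : 0 < r)
    (hy : k * r ^ 2 < ∑ i, y i ^ 2) :
    mgf (fun w ↦ |∑ i, y i * w i|) (hiddenWeightLaw k) (-(2 / r)) ≤ 1 / 2 := by
  have hk : (0 : ℝ) < k := Nat.cast_pos.2 <| Nat.pos_of_ne_zero fun h ↦ by subst h; simp at hy
  have hsum : 0 < ∑ i, y i ^ 2 := hy.trans_le' (by positivity)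
  obtain ⟨σ, hσ⟩ : ∃ σ, σ = (k : ℝ≥0)⁻¹ * (∑ i, y i ^ 2).toNNReal := ⟨_, rfl⟩
  have hr_le : r ≤ √σ := by
    refine le_sqrt_of_sq_le ?_
    rw [hσ, NNReal.coe_mul, coe_toNNReal _ hsum.le, NNReal.coe_inv, NNReal.coe_natCast,
      inv_mul_eq_div, le_div_iff₀ hk, mul_comm]
    exact hy.le
  have hσ0 : σ ≠ 0 := by
    rintro rfl
    simp only [NNReal.coe_zero, sqrt_zero] at hr_le
    linarith
  calc mgf (fun w ↦ |∑ i, y i * w i|) (hiddenWeightLaw k) (-(2 / r))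
      = mgf (|·|) (gaussianReal 0 σ) (-(2 / r)) := by
        rw [hσ, ← map_sum_mul_pi_gaussianReal,
          mgf_map (Measurable.aemeasurable (by fun_prop)) (by fun_prop)]
        rfl
    _ ≤ 1 / (2 / r * √σ) := mgf_abs_gaussianReal_le hσ0 (div_pos two_pos hr)
    _ ≤ 1 / 2 := by
        refine one_div_le_one_div_of_le two_pos ?_
        rw [div_mul_eq_mul_div, le_div_iff₀ hr]
        gcongr

theorem mgf_abs_filterRow_le {x : Fin n → Fin (m * k) → ℝ} {v : EuclideanSpace ℝ (Fin n)} {r : ℝ}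
    (hr : 0 < r) (hx : k * r ^ 2 < ∑ i, patchSum v x i ^ 2) :
    mgf (fun w ↦ |filterRow x w v|) (hiddenWeightLaw k) (-(2 / r)) ≤ 3 / 4 := by
  have hsymm := two_mul_mgf_abs_neg_le_one_add_mgf_abs_sub_comp
    (f := fun w ↦ filterRow x w v) (by fun_prop) (measurePreserving_neg_hiddenWeightLaw k)
    (div_pos two_pos hr).le
  simp only [filterRow_sub_filterRow_neg] at hsymm
  linarith [mgf_abs_sum_mul_hiddenWeightLaw_le hr hx]

theorem measureReal_sum_abs_filterRow_le_le {p : ℕ} {x : Fin n → Fin (m * k) → ℝ}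
    {v : EuclideanSpace ℝ (Fin n)} {r : ℝ} (hr : 0 < r)
    (hx : k * r ^ 2 < ∑ i, patchSum v x i ^ 2) :
    (Measure.pi fun _ : Fin p ↦ hiddenWeightLaw k).real
      {W | ∑ j, |filterRow x (W j) v| ≤ p * (r / 16)} ≤ exp (-(p / 8)) := by
  have h := measureReal_sum_pi_le_le_pow (ι := Fin p) (μ := hiddenWeightLaw k)
    (f := fun w ↦ |filterRow x w v|) (by fun_prop) (fun w ↦ abs_nonneg _)
    (div_pos two_pos hr).le (r / 16)
  rw [Fintype.card_fin] at h
  calc _ ≤ _ := h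
    _ ≤ (exp (1 / 8) * exp (-(1 / 4))) ^ p := by
        have hexp : 2 / r * (r / 16) = 1 / 8 := by field_simp; norm_num
        have hmgf : mgf (fun w ↦ |filterRow x w v|) (hiddenWeightLaw k) (-(2 / r))
            ≤ exp (-(1 / 4)) :=
          (mgf_abs_filterRow_le hr hx).trans (by linarith [add_one_le_exp (-(1 / 4) : ℝ)])
        rw [hexp]
        exact pow_le_pow_left₀ (mul_nonneg (exp_pos _).le mgf_nonneg)
          (mul_le_mul_of_nonneg_left hmgf (exp_pos _).le) p
    _ = exp (-(p / 8)) := by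
        rw [← exp_add, ← exp_nat_mul]
        congr 1
        ring

end Laws

section Moments

theorem measureReal_prod_le_add {α β : Type*} [MeasurableSpace α] [MeasurableSpace β]
    {μ : Measure α} {ν : Measure β} [IsProbabilityMeasure μ] [IsProbabilityMeasure ν]
    {S : Set (α × β)} {B : Set α} (hS : MeasurableSet S) (hB : MeasurableSet B) {c : ℝ}
    (hc : 0 ≤ c) (h : ∀ x ∉ B, ν.real (Prod.mk x ⁻¹' S) ≤ c) :
    (μ.prod ν).real S ≤ μ.real B + c := by
  refine ENNReal.toReal_le_of_le_ofReal (by positivity) ?_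
  calc μ.prod ν S = ∫⁻ x, ν (Prod.mk x ⁻¹' S) ∂μ := Measure.prod_apply hS
    _ ≤ ∫⁻ x, (B.indicator 1 x + ENNReal.ofReal c) ∂μ := lintegral_mono fun x ↦ by
        by_cases hx : x ∈ B
        · simpa [hx] using prob_le_one.trans le_self_add
        · simpa [hx] using (ENNReal.le_ofReal_iff_toReal_le (measure_ne_top _ _) hc).2 (h x hx)
    _ = ENNReal.ofReal (μ.real B + c) := by
        rw [lintegral_add_right _ measurable_const, lintegral_indicator_one hB,
          ENNReal.ofReal_add measureReal_nonneg hc]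
        simp

variable {Ω : Type*} [MeasurableSpace Ω] {μ : Measure Ω}

theorem lintegral_ofReal_le_of_lintegral_sq_le [IsProbabilityMeasure μ] {f : Ω → ℝ} {A : ℝ}
    (hA : 0 < A) (hf : ∫⁻ ω, ENNReal.ofReal (f ω ^ 2) ∂μ ≤ ENNReal.ofReal (A ^ 2)) :
    ∫⁻ ω, ENNReal.ofReal (f ω) ∂μ ≤ ENNReal.ofReal A := by
  have hpt : ∀ ω, f ω ≤ (2 * A)⁻¹ * f ω ^ 2 + A / 2 := fun ω ↦ by
    have h : (2 * A)⁻¹ * f ω ^ 2 + A / 2 - f ω = (2 * A)⁻¹ * (f ω - A) ^ 2 := by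
      field_simp
      ring
    linarith [show 0 ≤ (2 * A)⁻¹ * (f ω - A) ^ 2 by positivity]
  calc ∫⁻ ω, ENNReal.ofReal (f ω) ∂μ
      ≤ ∫⁻ ω, (ENNReal.ofReal (2 * A)⁻¹ * ENNReal.ofReal (f ω ^ 2) + ENNReal.ofReal (A / 2)) ∂μ :=
        lintegral_mono fun ω ↦ by
          rw [← ENNReal.ofReal_mul (by positivity), ← ENNReal.ofReal_add (by positivity)
            (by positivity)]
          exact ENNReal.ofReal_le_ofReal (hpt ω)
    _ = ENNReal.ofReal (2 * A)⁻¹ * ∫⁻ ω, ENNReal.ofReal (f ω ^ 2) ∂μ + ENNReal.ofReal (A / 2) := by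
        rw [lintegral_add_right _ measurable_const,
          lintegral_const_mul' _ _ ENNReal.ofReal_ne_top]
        simp
    _ ≤ ENNReal.ofReal (2 * A)⁻¹ * ENNReal.ofReal (A ^ 2) + ENNReal.ofReal (A / 2) := by gcongr
    _ = ENNReal.ofReal A := by
        rw [← ENNReal.ofReal_mul (by positivity), ← ENNReal.ofReal_add (by positivity)
          (by positivity)]
        congr 1
        field_simp
        norm_num

theorem measureReal_card_mul_le_sum_le {ι : Type*} [Fintype ι] [Nonempty ι] {f : ι → Ω → ℝ}
    (hf : ∀ j, Measurable (f j)) (hf0 : ∀ j, 0 ≤ f j) {C τ : ℝ} (hC : 0 ≤ C) (hτ : 0 < τ)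
    (h : ∀ j, ∫⁻ ω, ENNReal.ofReal (f j ω) ∂μ ≤ ENNReal.ofReal C) :
    μ.real {ω | Fintype.card ι * τ ≤ ∑ j, f j ω} ≤ C / τ := by
  have hcard : (0 : ℝ) < Fintype.card ι := Nat.cast_pos.2 Fintype.card_pos
  refine ENNReal.toReal_le_of_le_ofReal (by positivity) ?_
  calc μ {ω | Fintype.card ι * τ ≤ ∑ j, f j ω}
      = μ {ω | ENNReal.ofReal (Fintype.card ι * τ) ≤ ENNReal.ofReal (∑ j, f j ω)} := by
        congr 1 with ω
        exact (ENNReal.ofReal_le_ofReal_iff (Finset.sum_nonneg fun j _ ↦ hf0 j ω)).symm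
    _ ≤ (∫⁻ ω, ENNReal.ofReal (∑ j, f j ω) ∂μ) / ENNReal.ofReal (Fintype.card ι * τ) :=
        meas_ge_le_lintegral_div (by fun_prop) (ENNReal.ofReal_pos.2 (by positivity)).ne'
          ENNReal.ofReal_ne_top
    _ = (∑ j, ∫⁻ ω, ENNReal.ofReal (f j ω) ∂μ) / ENNReal.ofReal (Fintype.card ι * τ) := by
        simp_rw [ENNReal.ofReal_sum_of_nonneg fun j _ ↦ hf0 j _]
        rw [lintegral_finsetSum _ fun j _ ↦ (hf j).ennreal_ofReal]
    _ ≤ (∑ _j : ι, ENNReal.ofReal C) / ENNReal.ofReal (Fintype.card ι * τ) := by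
        gcongr with j
        exact h j
    _ = ENNReal.ofReal (C / τ) := by
        rw [← ENNReal.ofReal_sum_of_nonneg fun _ _ ↦ hC,
          ← ENNReal.ofReal_div_of_pos (by positivity), Finset.sum_const, Finset.card_univ,
          nsmul_eq_mul, mul_div_mul_left _ _ hcard.ne']

end Moments

section Design

variable {m n p k : ℕ}

/-- The joint law of the data `x₁, …, xₙ` and of the hidden weights `W₁, …, W_p`. -/
abbrev designLaw (m n p k : ℕ) : Measure ((Fin n → Fin (m * k) → ℝ) × (Fin p → Fin k → ℝ)) :=
  (Measure.pi fun _ ↦ stdGaussianVec (m * k)).prod (Measure.pi fun _ ↦ hiddenWeightLaw k)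

theorem measureReal_sum_abs_filterRow_le_le_of_norm_eq_one (hm : 0 < m)
    {v : EuclideanSpace ℝ (Fin n)} (hv : ‖v‖ = 1) {t : ℝ} (ht : 0 < t) :
    (designLaw m n p k).real {ω | ∑ j, |filterRow ω.1 (ω.2 j) v| ≤ p * (t * √m / 16)}
      ≤ (3 * t) ^ k + exp (-(p / 8)) := by
  have hr : 0 < t * √m := by positivity
  refine (measureReal_prod_le_add (B := {x | ∑ i, patchSum v x i ^ 2 ≤ k * (t * √m) ^ 2})
    (measurableSet_le (by fun_prop) measurable_const)
    (measurableSet_le (by fun_prop) measurable_const) (exp_pos (-(p / 8))).le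
    fun x hx ↦ ?_).trans ?_
  · exact measureReal_sum_abs_filterRow_le_le hr (not_le.1 hx)
  · gcongr
    have hv0 : v ≠ 0 := norm_ne_zero_iff.1 (by simp [hv])
    refine (measureReal_sum_patchSum_sq_le_le hm hv0 hr).trans_eq ?_
    rw [hv]
    congr 1
    field_simp

theorem lintegral_dot_sq_hiddenWeightLaw (y : Fin k → ℝ) :
    ∫⁻ w, ENNReal.ofReal (dot w y ^ 2) ∂hiddenWeightLaw k
      = ENNReal.ofReal ((∑ i, y i ^ 2) / k) := by
  have hdot : (fun w ↦ dot w y) = fun w ↦ ∑ i, y i * w i := by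
    simp only [dot, mul_comm]
  rcases k.eq_zero_or_pos with rfl | hk
  · simp [dot]
  have hlaw : (hiddenWeightLaw k).map (fun w ↦ dot w y) = _ :=
    hdot ▸ map_sum_mul_pi_gaussianReal (k : ℝ≥0)⁻¹ y
  rw [← lintegral_map (f := fun t : ℝ ↦ ENNReal.ofReal (t ^ 2)) (by fun_prop)
    (hdot ▸ by fun_prop), hlaw, lintegral_sq_gaussianReal, ENNReal.ofReal, div_eq_inv_mul,
    toNNReal_mul (by positivity)]
  simp [toNNReal_inv]

theorem norm_filterRow_sq_le (x : Fin n → Fin (m * k) → ℝ) (w : Fin k → ℝ) :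
    ‖filterRow x w‖ ^ 2 ≤ m * ∑ s, ∑ a, dot w (patch m k a (x s)) ^ 2 := by
  rw [norm_filterRow_sq, Finset.mul_sum]
  gcongr with s
  calc (∑ a, relu (dot w (patch m k a (x s)))) ^ 2
      ≤ m * ∑ a, relu (dot w (patch m k a (x s))) ^ 2 := by
        simpa using sq_sum_le_card_mul_sum_sq (s := Finset.univ)
          (f := fun a ↦ relu (dot w (patch m k a (x s))))
    _ ≤ m * ∑ a, dot w (patch m k a (x s)) ^ 2 := by
        exact mul_le_mul_of_nonneg_left (Finset.sum_le_sum fun a _ ↦ relu_sq_le_sq _)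
          m.cast_nonneg

theorem lintegral_norm_filterRow_sq_hiddenWeightLaw_le (x : Fin n → Fin (m * k) → ℝ) :
    ∫⁻ w, ENNReal.ofReal (‖filterRow x w‖ ^ 2) ∂hiddenWeightLaw k
      ≤ ENNReal.ofReal (m / k) * ∑ s, ∑ c, ENNReal.ofReal (x s c ^ 2) := by
  calc ∫⁻ w, ENNReal.ofReal (‖filterRow x w‖ ^ 2) ∂hiddenWeightLaw k
      ≤ ∫⁻ w, ENNReal.ofReal m * ∑ s, ∑ a, ENNReal.ofReal (dot w (patch m k a (x s)) ^ 2)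
          ∂hiddenWeightLaw k := lintegral_mono fun w ↦ by
        simp only [← ENNReal.ofReal_sum_of_nonneg, sq_nonneg, Finset.sum_nonneg, implies_true]
        rw [← ENNReal.ofReal_mul (by positivity)]
        exact ENNReal.ofReal_le_ofReal (norm_filterRow_sq_le x w)
    _ = ENNReal.ofReal m * ∑ s, ∑ a, ENNReal.ofReal ((∑ i, patch m k a (x s) i ^ 2) / k) := by
        have hmeas : ∀ y : Fin k → ℝ, Measurable fun w ↦ ENNReal.ofReal (dot w y ^ 2) := fun y ↦ by
          simp only [dot]
          fun_prop
        rw [lintegral_const_mul' _ _ ENNReal.ofReal_ne_top, lintegral_finsetSum _ fun s _ ↦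
          Finset.measurable_sum _ fun a _ ↦ hmeas _]
        simp_rw [lintegral_finsetSum _ fun a _ ↦ hmeas (patch m k a (x _)),
          lintegral_dot_sq_hiddenWeightLaw]
    _ = ENNReal.ofReal (m / k) * ∑ s, ∑ c, ENNReal.ofReal (x s c ^ 2) := by
        have hpatch : ∀ y : Fin (m * k) → ℝ,
            ∑ a, ENNReal.ofReal ((∑ i, patch m k a y i ^ 2) / k)
              = ENNReal.ofReal (k : ℝ)⁻¹ * ∑ c, ENNReal.ofReal (y c ^ 2) := fun y ↦ by
          rw [← ENNReal.ofReal_sum_of_nonneg fun _ _ ↦ by positivity, ← Finset.sum_div,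
            sum_sum_patch_sq, ← ENNReal.ofReal_sum_of_nonneg fun _ _ ↦ sq_nonneg _,
            ← ENNReal.ofReal_mul (by positivity), inv_mul_eq_div]
        simp_rw [hpatch, ← Finset.mul_sum]
        rw [← mul_assoc, ← ENNReal.ofReal_mul (by positivity), div_eq_mul_inv]

theorem lintegral_sq_pi_stdGaussianVec (d : ℕ) (s : Fin n) (c : Fin d) :
    ∫⁻ x, ENNReal.ofReal (x s c ^ 2) ∂(Measure.pi fun _ : Fin n ↦ stdGaussianVec d) = 1 := by
  have hmp : MeasurePreserving (fun x : Fin n → Fin d → ℝ ↦ x s c)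
      (Measure.pi fun _ ↦ stdGaussianVec d) (gaussianReal 0 1) :=
    (measurePreserving_eval (fun _ : Fin d ↦ gaussianReal 0 1) c).comp
      (measurePreserving_eval (fun _ : Fin n ↦ stdGaussianVec d) s)
  rw [hmp.lintegral_comp (f := fun t ↦ ENNReal.ofReal (t ^ 2)) (by fun_prop),
    lintegral_sq_gaussianReal, ENNReal.coe_one]

theorem lintegral_norm_filterRow_sq_designLaw_le (hk : 0 < k) (j : Fin p) :
    ∫⁻ ω, ENNReal.ofReal (‖filterRow ω.1 (ω.2 j)‖ ^ 2) ∂designLaw m n p k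
      ≤ ENNReal.ofReal ((m * √n) ^ 2) := by
  have hW : ∀ x : Fin n → Fin (m * k) → ℝ,
      ∫⁻ W, ENNReal.ofReal (‖filterRow x (W j)‖ ^ 2) ∂(Measure.pi fun _ ↦ hiddenWeightLaw k)
        ≤ ENNReal.ofReal (m / k) * ∑ s, ∑ c, ENNReal.ofReal (x s c ^ 2) := fun x ↦ by
    rw [(measurePreserving_eval (fun _ ↦ hiddenWeightLaw k) j).lintegral_comp
      (f := fun w ↦ ENNReal.ofReal (‖filterRow x w‖ ^ 2)) (by fun_prop)]
    exact lintegral_norm_filterRow_sq_hiddenWeightLaw_le x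
  calc ∫⁻ ω, ENNReal.ofReal (‖filterRow ω.1 (ω.2 j)‖ ^ 2) ∂designLaw m n p k
      = ∫⁻ x, ∫⁻ W, ENNReal.ofReal (‖filterRow x (W j)‖ ^ 2)
          ∂(Measure.pi fun _ ↦ hiddenWeightLaw k) ∂(Measure.pi fun _ ↦ stdGaussianVec (m * k)) :=
        lintegral_prod _ (Measurable.aemeasurable (by fun_prop))
    _ ≤ ∫⁻ x, ENNReal.ofReal (m / k) * ∑ s, ∑ c, ENNReal.ofReal (x s c ^ 2)
          ∂(Measure.pi fun _ ↦ stdGaussianVec (m * k)) := lintegral_mono hW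
    _ = ENNReal.ofReal (m / k) * (n * (m * k : ℕ)) := by
        rw [lintegral_const_mul' _ _ ENNReal.ofReal_ne_top,
          lintegral_finsetSum _ fun s _ ↦ by fun_prop]
        have hsum : ∀ s, ∫⁻ x, ∑ c, ENNReal.ofReal (x s c ^ 2)
            ∂(Measure.pi fun _ : Fin n ↦ stdGaussianVec (m * k)) = (m * k : ℕ) := fun s ↦ by
          rw [lintegral_finsetSum _ fun c _ ↦ by fun_prop]
          simp [lintegral_sq_pi_stdGaussianVec]
        simp [hsum]
    _ = ENNReal.ofReal ((m * √n) ^ 2) := by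
        rw [← ENNReal.ofReal_natCast, ← ENNReal.ofReal_natCast,
          ← ENNReal.ofReal_mul (by positivity), ← ENNReal.ofReal_mul (by positivity)]
        congr 1
        rw [mul_pow, sq_sqrt (by positivity)]
        push_cast
        field_simp

theorem lintegral_norm_filterRow_designLaw_le (hm : 0 < m) (hn : 0 < n) (hk : 0 < k) (j : Fin p) :
    ∫⁻ ω, ENNReal.ofReal ‖filterRow ω.1 (ω.2 j)‖ ∂designLaw m n p k ≤ ENNReal.ofReal (m * √n) :=
  lintegral_ofReal_le_of_lintegral_sq_le (by positivity)
    (lintegral_norm_filterRow_sq_designLaw_le hk j)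

end Design

section ExactRecovery

open Metric

variable {m n p k : ℕ}

/-- The event that least absolute deviations recovers the coefficient vector exactly, whatever this
vector is: for the corruption `z` of `A_β v*`, the only minimizer of `v ↦ ‖A_β v* + z - A_β v‖₁`
is `v*`. -/
def ExactRecovery (x : Fin n → Fin (m * k) → ℝ) (W : Fin p → Fin k → ℝ) (z : Fin p → ℝ) : Prop :=
  ∀ vstar vtilde : Fin n → ℝ,
    (∀ v, ∑ j, |AbetaApp m n p k x W vstar j + z j - AbetaApp m n p k x W vtilde j|
      ≤ ∑ j, |AbetaApp m n p k x W vstar j + z j - AbetaApp m n p k x W v j|) →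
    vtilde = vstar

theorem exactRecovery_of_isCover_sphere {x : Fin n → Fin (m * k) → ℝ} {W : Fin p → Fin k → ℝ}
    {z : Fin p → ℝ} {N : Set (EuclideanSpace ℝ (Fin n))} {η : ℝ≥0} {t θ : ℝ}
    (hcover : IsCover η (sphere 0 1) N) (hθ : 0 < θ) (hη : 32 * √(m * n) * η ≤ θ * t)
    (hN : ∀ v ∈ N, p * (t * √m / 16) < ∑ j, |filterRow x (W j) v|)
    (hW : ∑ j, ‖filterRow x (W j)‖ < p * (m * √n / θ))
    (hz : ∑ j with z j ≠ 0, ‖filterRow x (W j)‖ < p * (t * √m / 64)) : ExactRecovery x W z := by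
  have hη' : m * √n / θ * η ≤ t * √m / 32 := by
    rw [sqrt_mul m.cast_nonneg] at hη
    rw [div_mul_eq_mul_div, div_le_div_iff₀ hθ (by norm_num)]
    calc m * √n * η * 32 = √m * (32 * (√m * √n) * η) := by
          linear_combination -32 * √n * η * mul_self_sqrt (m.cast_nonneg (α := ℝ))
      _ ≤ √m * (θ * t) := by gcongr
      _ = t * √m * θ := by ring
  have hfar : ∀ v ∈ N, 2 * (p * (t * √m / 32)) ≤ ∑ j, |filterRow x (W j) v| := fun v hv ↦ by
    linarith [hN v hv]
  have hnear : (∑ j, ‖filterRow x (W j)‖) * η ≤ p * (t * √m / 32) := by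
    calc (∑ j, ‖filterRow x (W j)‖) * η ≤ p * (m * √n / θ) * η := by gcongr
      _ = p * (m * √n / θ * η) := mul_assoc _ _ _
      _ ≤ p * (t * √m / 32) := by gcongr
  intro vstar vtilde hmin
  simp only [AbetaApp_eq_filterRow] at hmin
  exact WithLp.toLp_injective 2
    (eq_of_sum_abs_add_sub_le (mul_norm_le_sum_abs_of_isCover_sphere hcover hfar hnear)
      (by linarith) (hmin vstar))

theorem measureReal_exists_mem_sum_abs_filterRow_le_le (hm : 0 < m)
    {N : Finset (EuclideanSpace ℝ (Fin n))}
    (hN : (N : Set (EuclideanSpace ℝ (Fin n))) ⊆ sphere 0 1) {t : ℝ} (ht : 0 < t) :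
    (designLaw m n p k).real {ω | ∃ v ∈ N, ∑ j, |filterRow ω.1 (ω.2 j) v| ≤ p * (t * √m / 16)}
      ≤ N.card * ((3 * t) ^ k + exp (-(p / 8))) := by
  have hunion : {ω : (Fin n → Fin (m * k) → ℝ) × (Fin p → Fin k → ℝ) |
      ∃ v ∈ N, ∑ j, |filterRow ω.1 (ω.2 j) v| ≤ p * (t * √m / 16)}
      = ⋃ v ∈ N, {ω | ∑ j, |filterRow ω.1 (ω.2 j) v| ≤ p * (t * √m / 16)} := by
    ext ω
    simp
  rw [hunion]
  refine (measureReal_biUnion_finset_le _ _).trans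
    ((Finset.sum_le_card_nsmul _ _ _ fun v hv ↦ ?_).trans_eq (nsmul_eq_mul _ _))
  exact measureReal_sum_abs_filterRow_le_le_of_norm_eq_one hm (by simpa using hN hv) ht

theorem measureReal_le_sum_norm_filterRow_le (hm : 0 < m) (hn : 0 < n) (hp : 0 < p) (hk : 0 < k)
    {τ : ℝ} (hτ : 0 < τ) :
    (designLaw m n p k).real {ω | p * τ ≤ ∑ j, ‖filterRow ω.1 (ω.2 j)‖} ≤ m * √n / τ := by
  have : NeZero p := ⟨hp.ne'⟩
  simpa using measureReal_card_mul_le_sum_le (μ := designLaw m n p k)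
    (f := fun j ω ↦ ‖filterRow ω.1 (ω.2 j)‖) (by fun_prop)
    (fun j ω ↦ norm_nonneg _) (by positivity) hτ (lintegral_norm_filterRow_designLaw_le hm hn hk)

theorem measureReal_le_sum_norm_filterRow_filter_le (hm : 0 < m) (hn : 0 < n) (hp : 0 < p)
    (hk : 0 < k) {ν : Measure (Fin p → ℝ)} [IsProbabilityMeasure ν] {ε : ℝ}
    (hν : ∀ j, ν.real {z | z j ≠ 0} ≤ ε) {τ : ℝ} (hτ : 0 < τ) :
    ((designLaw m n p k).prod ν).real
      {ω | p * τ ≤ ∑ j with ω.2 j ≠ 0, ‖filterRow ω.1.1 (ω.1.2 j)‖} ≤ m * √n * ε / τ := by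
  have : NeZero p := ⟨hp.ne'⟩
  have hε : 0 ≤ ε := measureReal_nonneg.trans (hν 0)
  have hsupp : ∀ j, MeasurableSet {z : Fin p → ℝ | z j ≠ 0} := fun j ↦
    (measurable_pi_apply j (measurableSet_singleton 0)).compl
  have hind : ∀ j, Measurable ({z : Fin p → ℝ | z j ≠ 0}.indicator (1 : (Fin p → ℝ) → ℝ)) := fun j ↦
    measurable_one.indicator (hsupp j)
  have h := measureReal_card_mul_le_sum_le (μ := (designLaw m n p k).prod ν)
    (f := fun j ω ↦ ‖filterRow ω.1.1 (ω.1.2 j)‖ * {z : Fin p → ℝ | z j ≠ 0}.indicator 1 ω.2)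
    (fun j ↦ Measurable.mul (by fun_prop) ((hind j).comp measurable_snd))
    (fun j ω ↦ mul_nonneg (norm_nonneg _) (Set.indicator_nonneg (fun _ _ ↦ zero_le_one) _))
    (C := m * √n * ε) (by positivity) hτ fun j ↦ ?_
  · simpa [Set.indicator_apply, Finset.sum_filter] using h
  · calc ∫⁻ ω, ENNReal.ofReal (‖filterRow ω.1.1 (ω.1.2 j)‖ *
          {z : Fin p → ℝ | z j ≠ 0}.indicator 1 ω.2) ∂(designLaw m n p k).prod ν
        = ∫⁻ ω, ENNReal.ofReal ‖filterRow ω.1.1 (ω.1.2 j)‖ *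
          {z : Fin p → ℝ | z j ≠ 0}.indicator 1 ω.2 ∂(designLaw m n p k).prod ν := by
          refine lintegral_congr fun ω ↦ ?_
          rw [ENNReal.ofReal_mul (norm_nonneg _)]
          by_cases h : ω.2 j = 0 <;> simp [h]
      _ = (∫⁻ ω, ENNReal.ofReal ‖filterRow ω.1 (ω.2 j)‖ ∂designLaw m n p k)
          * ν {z | z j ≠ 0} := by
          rw [lintegral_prod_mul
            (f := fun ω : (Fin n → Fin (m * k) → ℝ) × (Fin p → Fin k → ℝ) ↦
              ENNReal.ofReal ‖filterRow ω.1 (ω.2 j)‖) (Measurable.aemeasurable (by fun_prop))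
            (measurable_one.indicator (hsupp j)).aemeasurable, lintegral_indicator_one (hsupp j)]
      _ ≤ ENNReal.ofReal (m * √n) * ENNReal.ofReal ε := by
          gcongr
          · exact lintegral_norm_filterRow_designLaw_le hm hn hk j
          · exact (ENNReal.le_ofReal_iff_toReal_le (measure_ne_top _ _) hε).2 (hν j)
      _ = ENNReal.ofReal (m * √n * ε) := (ENNReal.ofReal_mul (by positivity)).symm

theorem measureReal_not_exactRecovery_le (hm : 0 < m) (hn : 0 < n) (hp : 0 < p) (hk : 0 < k)
    {ν : Measure (Fin p → ℝ)} [IsProbabilityMeasure ν] {ε : ℝ}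
    (hν : ∀ j, ν.real {z | z j ≠ 0} ≤ ε) {N : Finset (EuclideanSpace ℝ (Fin n))} {η : ℝ≥0}
    (hN : (N : Set (EuclideanSpace ℝ (Fin n))) ⊆ sphere 0 1)
    (hcover : IsCover η (sphere 0 1) (N : Set (EuclideanSpace ℝ (Fin n)))) {t θ : ℝ}
    (ht : 0 < t) (hθ : 0 < θ) (hη : 32 * √(m * n) * η ≤ θ * t) :
    ((designLaw m n p k).prod ν).real {ω | ¬ ExactRecovery ω.1.1 ω.1.2 ω.2}
      ≤ N.card * ((3 * t) ^ k + exp (-(p / 8))) + θ + 64 * (ε * √(m * n)) / t := by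
  set A := {ω : (Fin n → Fin (m * k) → ℝ) × (Fin p → Fin k → ℝ) |
    ∃ v ∈ N, ∑ j, |filterRow ω.1 (ω.2 j) v| ≤ p * (t * √m / 16)}
  set B := {ω : (Fin n → Fin (m * k) → ℝ) × (Fin p → Fin k → ℝ) |
    p * (m * √n / θ) ≤ ∑ j, ‖filterRow ω.1 (ω.2 j)‖}
  set C := {ω : ((Fin n → Fin (m * k) → ℝ) × (Fin p → Fin k → ℝ)) × (Fin p → ℝ) |
    p * (t * √m / 64) ≤ ∑ j with ω.2 j ≠ 0, ‖filterRow ω.1.1 (ω.1.2 j)‖}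
  have hsub : {ω : ((Fin n → Fin (m * k) → ℝ) × (Fin p → Fin k → ℝ)) × (Fin p → ℝ) |
      ¬ ExactRecovery ω.1.1 ω.1.2 ω.2} ⊆ A ×ˢ Set.univ ∪ B ×ˢ Set.univ ∪ C := by
    refine fun ω ↦ not_imp_comm.1 fun hω ↦ ?_
    simp only [A, B, C, Set.mem_union, Set.mem_prod, Set.mem_univ, and_true, Set.mem_ofPred_eq,
      not_or, not_exists, not_and, not_le] at hω
    obtain ⟨⟨hA, hB⟩, hC⟩ := hω
    exact exactRecovery_of_isCover_sphere hcover hθ hη hA hB hC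
  have hA : (designLaw m n p k).real A ≤ N.card * ((3 * t) ^ k + exp (-(p / 8))) :=
    measureReal_exists_mem_sum_abs_filterRow_le_le hm hN ht
  have hB : (designLaw m n p k).real B ≤ θ :=
    (measureReal_le_sum_norm_filterRow_le hm hn hp hk (by positivity)).trans_eq (by field_simp)
  have hC : ((designLaw m n p k).prod ν).real C ≤ 64 * (ε * √(m * n)) / t := by
    refine (measureReal_le_sum_norm_filterRow_filter_le hm hn hp hk hν (by positivity)).trans_eq ?_
    rw [sqrt_mul m.cast_nonneg]
    field_simp
    rw [sq_sqrt m.cast_nonneg, mul_comm]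
  have hA' := measureReal_prod_prod (μ := designLaw m n p k) (ν := ν) A Set.univ
  have hB' := measureReal_prod_prod (μ := designLaw m n p k) (ν := ν) B Set.univ
  rw [probReal_univ, mul_one] at hA' hB'
  calc _ ≤ _ := measureReal_mono hsub
    _ ≤ _ := measureReal_union_le _ _
    _ ≤ _ := add_le_add_left (measureReal_union_le _ _) _
    _ ≤ _ := by rw [hA', hB']; gcongr

end ExactRecovery

section Constants

open Metric

variable {m n p k : ℕ}

theorem log_mul_sqrt_le {K M : ℝ} (hK : 1 ≤ K) (hM : 2 ≤ M) : log (K * √M) ≤ 2 * K * log M := by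
  have hlogM : 1 / 2 ≤ log M := by
    linarith [log_two_gt_d9, log_le_log two_pos hM]
  rw [log_mul (by positivity) (by positivity), log_sqrt (by positivity)]
  nlinarith [log_le_sub_one_of_pos (show 0 < K by linarith)]

theorem exists_finset_isCover_sphere_card_le_exp {K : ℝ≥0} (hK : 3 ≤ K) (hm : 0 < m) (hn : 0 < n)
    (hk : 0 < k) (hnk : 2 * K * (n * log (m * n)) ≤ k) (hnp : 32 * K * (m * n : ℝ) ^ 2 ≤ p) :
    ∃ N : Finset (EuclideanSpace ℝ (Fin n)), (N : Set (EuclideanSpace ℝ (Fin n))) ⊆ sphere 0 1 ∧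
      IsCover (3 / (K * NNReal.sqrt (m * n))) (sphere 0 1) (N : Set (EuclideanSpace ℝ (Fin n))) ∧
      (N.card : ℝ) ≤ exp k ∧ (N.card : ℝ) ≤ exp (p / 16) := by
  have hM : (1 : ℝ) ≤ m * n := by exact_mod_cast Nat.mul_pos hm hn
  have hK' : (3 : ℝ) ≤ K := by exact_mod_cast hK
  obtain rfl | hn2 : n = 1 ∨ 2 ≤ n := by lia
  · obtain ⟨N, hN, hcard⟩ := exists_finset_eq_sphere_of_finrank_eq_one
      (E := EuclideanSpace ℝ (Fin 1)) (by simp)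
    have hcard' : (N.card : ℝ) ≤ 2 := by exact_mod_cast hcard
    refine ⟨N, hN.le, hN ▸ .rfl, ?_, ?_⟩
    · have hk1 : (1 : ℝ) ≤ k := by exact_mod_cast hk
      linarith [add_one_le_exp (k : ℝ)]
    · nlinarith [hK', add_one_le_exp (p / 16 : ℝ)]
  · have hn2' : (2 : ℝ) ≤ n := by exact_mod_cast hn2
    have hnM : (n : ℝ) ≤ m * n := le_mul_of_one_le_left n.cast_nonneg (by exact_mod_cast hm)
    have hη1 : 3 / (K * NNReal.sqrt (m * n)) ≤ 1 := by
      refine div_le_one_of_le₀ (hK.trans (le_mul_of_one_le_right zero_le ?_)) zero_le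
      exact NNReal.one_le_sqrt.2 (by exact_mod_cast Nat.mul_pos hm hn)
    obtain ⟨N, hN, hcover, hcard⟩ := exists_finset_isCover_sphere
      (E := EuclideanSpace ℝ (Fin n)) (η := 3 / (K * NNReal.sqrt (m * n))) (by positivity) hη1
    have hcard_le : (N.card : ℝ) ≤ exp (2 * K * (n * log (m * n))) := by
      calc (N.card : ℝ) ≤ (K * √(m * n)) ^ n := by simpa [div_div_eq_mul_div] using hcard
        _ = exp (n * log (K * √(m * n))) := by
          rw [exp_nat_mul, exp_log (by positivity)]
        _ ≤ exp (2 * K * (n * log (m * n))) := by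
          rw [exp_le_exp, mul_left_comm]
          gcongr
          exact log_mul_sqrt_le (by linarith) (hn2'.trans hnM)
    refine ⟨N, hN, hcover, hcard_le.trans (exp_le_exp.2 hnk), hcard_le.trans (exp_le_exp.2 ?_)⟩
    calc 2 * K * (n * log (m * n)) ≤ 2 * K * ((m * n) * (m * n)) := by
          have hlog : log (m * n) ≤ m * n := log_le_self (by positivity)
          have hlog0 : 0 ≤ log (m * n : ℝ) := log_nonneg hM
          gcongr
      _ ≤ p / 16 := by linarith

end Constants

section Mixture

theorem isProbabilityMeasure_mixture_s7 {ε : ℝ} (hε0 : 0 ≤ ε) (hε1 : ε ≤ 1) (Q : Measure ℝ)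
    [IsProbabilityMeasure Q] : IsProbabilityMeasure (mixture ε Q) :=
  ⟨by simp [mixture, ← ENNReal.ofReal_add, hε0, hε1]⟩

theorem mixture_real_ne_zero_le {ε : ℝ} (hε : 0 ≤ ε) (Q : Measure ℝ) [IsProbabilityMeasure Q] :
    (mixture ε Q).real {0}ᶜ ≤ ε := by
  refine ENNReal.toReal_le_of_le_ofReal hε ?_
  simpa [mixture] using mul_le_of_le_one_right zero_le (prob_le_one (μ := Q) (s := {0}ᶜ))

theorem measureReal_pi_mixture_ne_zero_le {p : ℕ} {ε : ℝ} (hε0 : 0 ≤ ε) (hε1 : ε ≤ 1)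
    (Q : Fin p → Measure ℝ) [∀ j, IsProbabilityMeasure (Q j)] (j : Fin p) :
    (Measure.pi fun j ↦ mixture ε (Q j)).real {z | z j ≠ 0} ≤ ε := by
  have (j : Fin p) := isProbabilityMeasure_mixture_s7 hε0 hε1 (Q j)
  refine le_of_eq_of_le ?_ (mixture_real_ne_zero_le hε0 (Q j))
  exact (measurePreserving_eval (fun j ↦ mixture ε (Q j)) j).measureReal_preimage
    (measurableSet_singleton 0).compl.nullMeasurableSet

end Mixture

theorem mul_pow_add_exp_neg_le {C p s : ℝ} {k : ℕ} (hCk : C ≤ exp k)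
    (hCp : C ≤ exp (p / 16)) (hp : 0 < p) (hk : k ≠ 0) (hs0 : 0 ≤ s) (hs : 3 * s ≤ 1) :
    C * (s ^ k + exp (-(p / 8))) ≤ 3 * s + 16 / p := by
  have hpow : C * s ^ k ≤ 3 * s := by
    calc C * s ^ k ≤ exp k * s ^ k := by gcongr
      _ = (exp 1 * s) ^ k := by rw [mul_pow, ← exp_nat_mul, mul_one]
      _ ≤ (3 * s) ^ k := by gcongr; exact exp_one_lt_three.le
      _ ≤ 3 * s := pow_le_of_le_one (by positivity) hs hk
  have hexp : C * exp (-(p / 8)) ≤ 16 / p := by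
    calc C * exp (-(p / 8)) ≤ exp (p / 16) * exp (-(p / 8)) := by gcongr
      _ = (exp (p / 16))⁻¹ := by rw [← exp_add, ← exp_neg]; ring_nf
      _ ≤ (p / 16)⁻¹ := by gcongr; linarith [add_one_le_exp (p / 16)]
      _ = 16 / p := inv_div _ _
  linarith [mul_add C (s ^ k) (exp (-(p / 8)))]

theorem mul_sq_le_of_div_sqrt_le {K M p : ℝ} (hK : 8 ≤ K) (hM : 0 ≤ M) (hp : 0 < p)
    (h : M / √p ≤ 1 / (2 * K)) : 32 * K * M ^ 2 ≤ p := by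
  rw [div_le_div_iff₀ (by positivity) (by positivity), one_mul] at h
  calc 32 * K * M ^ 2 ≤ 4 * K * K * M ^ 2 := by gcongr; linarith
    _ = (M * (2 * K)) ^ 2 := by ring
    _ ≤ √p ^ 2 := by gcongr
    _ = p := sq_sqrt hp.le

/- The parameters are `t = δ / 96` and `θ = δ / 4`; the constant `36864 = 96 * 4 * 96` makes the net
of radius `3 / (K √(mn))` just fine enough for them. -/
theorem measureReal_not_exactRecovery_le_of_le {m n p k : ℕ} (hm : 0 < m) (hn : 0 < n)
    (hk : 0 < k) {ν : Measure (Fin p → ℝ)} [IsProbabilityMeasure ν] {ε : ℝ}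
    (hν : ∀ j, ν.real {z | z j ≠ 0} ≤ ε) {δ : ℝ} (hδ0 : 0 < δ) (hδ1 : δ ≤ 1) {K : ℝ≥0}
    (hK : K = 36864 / δ ^ 2) (hε : 2 * K * (ε * √(m * n)) ≤ 1)
    (hnp : 32 * K * (m * n : ℝ) ^ 2 ≤ p) (hnk : 2 * K * (n * log (m * n)) ≤ k) :
    ((designLaw m n p k).prod ν).real {ω | ¬ ExactRecovery ω.1.1 ω.1.2 ω.2} ≤ δ := by
  have hK1 : (36864 : ℝ) ≤ K := by
    rw [hK, le_div_iff₀ (by positivity)]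
    linarith [pow_le_one₀ hδ0.le hδ1 (n := 2)]
  have hp512 : (512 / δ : ℝ) ≤ p := by
    have hmn : (1 : ℝ) ≤ (m * n) ^ 2 := by exact_mod_cast Nat.pos_of_ne_zero (by positivity)
    calc 512 / δ ≤ 32 * (36864 / δ ^ 2) * 1 := by
          rw [div_le_iff₀ hδ0]
          field_simp
          linarith
      _ ≤ 32 * K * (m * n : ℝ) ^ 2 := by rw [hK]; gcongr
      _ ≤ p := hnp
  have hp : (0 : ℝ) < p := hp512.trans_lt' (by positivity)
  obtain ⟨N, hN, hcover, hcard_k, hcard_p⟩ := exists_finset_isCover_sphere_card_le_exp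
    (by exact_mod_cast hK1.trans' (by norm_num)) hm hn hk hnk hnp
  have hcard : N.card * ((3 * (δ / 96)) ^ k + exp (-(p / 8))) ≤ δ / 4 := by
    have hpδ : 16 / (p : ℝ) ≤ δ / 32 := by
      rw [div_le_div_iff₀ hp (by norm_num)]
      linarith [(div_le_iff₀' hδ0).1 hp512]
    linarith [mul_pow_add_exp_neg_le hcard_k hcard_p hp hk.ne'
      (by positivity : 0 ≤ 3 * (δ / 96)) (by linarith)]
  have hnoise : 64 * (ε * √(m * n)) / (δ / 96) ≤ δ / 4 := by
    rw [hK] at hε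
    field_simp at hε ⊢
    linarith [sq_nonneg δ]
  have hη : 32 * √(m * n) * (3 / (K * NNReal.sqrt (m * n)) : ℝ≥0) ≤ δ / 4 * (δ / 96) := by
    push_cast
    rw [hK]
    field_simp
    norm_num
  linarith [measureReal_not_exactRecovery_le hm hn (by exact_mod_cast hp) hk hν hN hcover
    (by positivity) (by positivity) hη]

theorem statement_7_general (δ : ℝ) (hδ : δ ∈ Set.Ioo (0 : ℝ) 1) :
    ∃ c : ℝ, 0 < c ∧ ∀ (ε : ℝ) (m n p k : ℕ), 0 < m → 0 < n → 0 < p → 0 < k →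
      ∀ (ν : Measure (Fin p → ℝ)) [IsProbabilityMeasure ν], (∀ j, ν.real {z | z j ≠ 0} ≤ ε) →
        ε * √(m * n) ≤ c → (m * n) / √p ≤ c → n * log (m * n) / k ≤ c →
        ENNReal.ofReal (1 - δ) ≤
          (designLaw m n p k).prod ν {ω | ExactRecovery ω.1.1 ω.1.2 ω.2} := by
  obtain ⟨hδ0, hδ1⟩ := hδ
  obtain ⟨K, hK⟩ : ∃ K : ℝ≥0, (K : ℝ) = 36864 / δ ^ 2 := ⟨⟨_, by positivity⟩, rfl⟩
  have hK8 : (8 : ℝ) ≤ K := by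
    rw [hK, le_div_iff₀ (by positivity)]
    linarith [pow_le_one₀ hδ0.le hδ1.le (n := 2)]
  refine ⟨1 / (2 * K), by positivity, fun ε m n p k hm hn hp hk ν _ hν hε hnp hnk ↦ ?_⟩
  have hfail : ((designLaw m n p k).prod ν).real {ω | ExactRecovery ω.1.1 ω.1.2 ω.2}ᶜ ≤ δ := by
    refine measureReal_not_exactRecovery_le_of_le hm hn hk hν hδ0 hδ1.le hK ?_ ?_ ?_
    · rwa [le_div_iff₀' (by positivity)] at hε
    · exact mul_sq_le_of_div_sqrt_le hK8 (by positivity) (by positivity) hnp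
    · rwa [div_le_div_iff₀ (by positivity) (by positivity), one_mul, mul_comm] at hnk
  have hunion := measureReal_union_le (μ := (designLaw m n p k).prod ν)
    {ω | ExactRecovery ω.1.1 ω.1.2 ω.2} {ω | ExactRecovery ω.1.1 ω.1.2 ω.2}ᶜ
  rw [Set.union_compl_self, probReal_univ] at hunion
  rw [ENNReal.ofReal_le_iff_le_toReal (measure_ne_top _ _)]
  exact sub_le_iff_le_add.2 (hunion.trans (add_le_add_right hfail _))

/-!
STATEMENT 7 (exact recovery of the output layer): `x_s` i.i.d. `N(0, I_d)`,
`W_j` i.i.d. `N(0, k⁻¹ I_k)`; `β* = A_β v*` in the column space of `A_β` (with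
`v*` a measurable function of data and weights); `η = β* + z` with mixture
contamination noise independent of data and weights.  For each `δ ∈ (0,1)` there
is `c(δ) > 0` such that if `ε√(mn) ≤ c(δ)`, `mn/√p ≤ c(δ)` and
`n log(mn)/k ≤ c(δ)`, then with probability at least `1 − δ` every minimizer `ṽ`
of `v ↦ ‖η − A_β v‖₁` satisfies `A_β ṽ = β*`.
-/

theorem statement_7 (δ : ℝ) (hδ : δ ∈ Set.Ioo (0 : ℝ) 1) :
    ∃ c : ℝ, 0 < c ∧
      ∀ (ε : ℝ), 0 ≤ ε → ε < 1 →
      ∀ (m n p k : ℕ), 0 < m → 0 < n → 0 < p → 0 < k →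
      ∀ (Q : Fin p → Measure ℝ), (∀ j, IsProbabilityMeasure (Q j)) →
      ∀ (vstar : (Fin n → Fin (m * k) → ℝ) × (Fin p → Fin k → ℝ) → (Fin n → ℝ)),
        Measurable vstar →
        ε * Real.sqrt (m * n : ℝ) ≤ c →
        (m * n : ℝ) / Real.sqrt p ≤ c →
        (n : ℝ) * Real.log (m * n : ℝ) / k ≤ c →
        ENNReal.ofReal (1 - δ) ≤
          (((Measure.pi fun _ : Fin n => stdGaussianVec (m * k)).prod
              (Measure.pi fun _ : Fin p => hiddenWeightLaw k)).prod
            (Measure.pi fun j : Fin p => mixture ε (Q j)))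
            {ω : ((Fin n → Fin (m * k) → ℝ) × (Fin p → Fin k → ℝ)) × (Fin p → ℝ) |
              ∀ vtilde : Fin n → ℝ,
                (∀ v : Fin n → ℝ,
                  (∑ j : Fin p,
                    |AbetaApp m n p k ω.1.1 ω.1.2 (vstar ω.1) j + ω.2 j
                      - AbetaApp m n p k ω.1.1 ω.1.2 vtilde j|) ≤
                  ∑ j : Fin p,
                    |AbetaApp m n p k ω.1.1 ω.1.2 (vstar ω.1) j + ω.2 j
                      - AbetaApp m n p k ω.1.1 ω.1.2 v j|) →
                ∀ j : Fin p, AbetaApp m n p k ω.1.1 ω.1.2 vtilde j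
                  = AbetaApp m n p k ω.1.1 ω.1.2 (vstar ω.1) j} := by
  obtain ⟨c, hc, hrecovery⟩ := statement_7_general δ hδ
  refine ⟨c, hc, fun ε hε0 hε1 m n p k hm hn hp hk Q _ vstar _ hε hmnp hnk ↦ ?_⟩
  have (j : Fin p) := isProbabilityMeasure_mixture_s7 hε0 hε1.le (Q j)
  exact (hrecovery ε m n p k hm hn hp hk _ (measureReal_pi_mixture_ne_zero_le hε0 hε1.le Q)
    hε hmnp hnk).trans (measure_mono fun ω hω vtilde hmin j ↦ by rw [hω (vstar ω.1) vtilde hmin])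

end
end
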